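/- arXiv:2601.16614 — 10 statements merged into one kernel-verified Lean document; each statement's English description precedes it below -/
import Mathlib

section
/- Let Γ^nf be a normal-form instance with k variables satisfying the Term-DAG/no-collision property, and let Γ^div be its diversification. Then for every n ≥ 1, S_n(Γ^nf) ≤ S_n(Γ^div); and if n ≥ k, then S_n(Γ^nf) ≥ S_{⌊n/k⌋}(Γ^div). In particular, log_n S_n(Γ^nf) and log_n S_n(Γ^div) have the same lim sup as n → ∞. -/
/-!
An interpretation of `Γ` restricts to one of its diversification with the same solutions (give
each fresh symbol the meaning of the symbol it replaces), which yields the upper bound.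

For the lower bound, split an `n`-element alphabet into `k = |V|` disjoint copies of a
`⌊n/k⌋`-element alphabet, one for each variable, through an injection
`ι : V × Fin ⌊n/k⌋ → Fin n`. Tagging a solution `a` of the diversification as
`x ↦ ι (x, a x)` makes the argument tuple of an equation reveal which variables it consists of,
so that by the no-collision property the symbol and the values of its arguments determine the
right-hand-side variable. Hence one function per original symbol can simulate all the fresh
symbols at once (`exists_tagged_interp`), and tagging is injective.

For the lim sups, `n = k * m` in the lower bound gives
`log S_m(Γdiv) ≤ log S_{km}(Γ)`, and `log (k * m) / log m → 1`.
-/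

namespace TC

/-- An interpretation of a signature (function symbols `F` with arities `ar`) on an
alphabet `A`. -/
abbrev Interp (F : Type) (ar : F → ℕ) (A : Type) : Type :=
  (f : F) → (Fin (ar f) → A) → A

end TC

namespace NF

/-- A normal-form Term Coding instance: a finite list of equations
`f(x_{i_1},…,x_{i_r}) = x_j`, each recorded as a triple (symbol, argument tuple,
right-hand-side variable).  Constant equations are the case `ar f = 0`. -/
structure Inst (F : Type) (ar : F → ℕ) (V : Type) : Type where
  eqs : List ((f : F) × ((Fin (ar f) → V) × V))

variable {F : Type} {ar : F → ℕ} {V : Type}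

/-- The solution set of an interpretation. -/
def sols {A : Type} (Γ : Inst F ar V) (I : TC.Interp F ar A) : Set (V → A) :=
  {a | ∀ e ∈ Γ.eqs, I e.1 (fun i => a (e.2.1 i)) = a e.2.2}

/-- The maximum code size `S_n(Γ)` over interpretations on an `n`-element alphabet. -/
noncomputable def Sn (Γ : Inst F ar V) (n : ℕ) : ℕ :=
  sSup {m | ∃ I : TC.Interp F ar (Fin n), m = (sols Γ I).ncard}

/-- Term-DAG / no-collision property: distinct equations using the same symbol have
distinct ordered argument tuples (constants occur in at most one equation). -/
def NoCollision (Γ : Inst F ar V) : Prop :=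
  ∀ (f : F) (args : Fin (ar f) → V) (j j' : V),
    (⟨f, (args, j)⟩ : (f : F) × ((Fin (ar f) → V) × V)) ∈ Γ.eqs →
    (⟨f, (args, j')⟩ : (f : F) × ((Fin (ar f) → V) × V)) ∈ Γ.eqs → j = j'

/-- Functional normal form: every defined variable is the right-hand side of exactly one
equation. -/
def FNF (Γ : Inst F ar V) : Prop :=
  ∀ e ∈ Γ.eqs, ∀ e' ∈ Γ.eqs, e.2.2 = e'.2.2 → e = e'

/-- Diversified: the function symbol of each non-constant equation occurs in no other
equation (constant symbols may be shared). -/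
def Diversified (Γ : Inst F ar V) : Prop :=
  ∀ e ∈ Γ.eqs, ∀ e' ∈ Γ.eqs, 0 < ar e.1 → e.1 = e'.1 → e = e'

/-- Source variables: those not defined by any equation. -/
def Src (Γ : Inst F ar V) : Set V := {x | ∀ e ∈ Γ.eqs, e.2.2 ≠ x}

/-- The dependency digraph: an edge `u → v` whenever `u` occurs as an argument of an
equation whose right-hand side is `v`. -/
def DepE (Γ : Inst F ar V) : V → V → Prop :=
  fun u v => ∃ e ∈ Γ.eqs, (∃ i, e.2.1 i = u) ∧ e.2.2 = v

/-- Arities of the diversified signature: one fresh symbol per equation. -/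
abbrev divAr (Γ : Inst F ar V) : Fin Γ.eqs.length → ℕ :=
  fun ℓ => ar (Γ.eqs.get ℓ).1

/-- The diversification of a normal-form instance: replace the symbol occurring in the
`ℓ`-th equation by a fresh symbol used only in that equation. -/
def div (Γ : Inst F ar V) : Inst (Fin Γ.eqs.length) (divAr Γ) V where
  eqs := (List.finRange Γ.eqs.length).map
    fun ℓ => ⟨ℓ, ((Γ.eqs.get ℓ).2.1, (Γ.eqs.get ℓ).2.2)⟩

/-- The labelled dependency graph: one (source) variable vertex per variable and one
equation vertex per equation, with edges from the argument variables of each equation to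
its equation vertex. -/
def LDepE (Γ : Inst F ar V) :
    (V ⊕ Fin Γ.eqs.length) → (V ⊕ Fin Γ.eqs.length) → Prop :=
  fun u v =>
    match u, v with
    | Sum.inl x, Sum.inr ℓ => ∃ i, (Γ.eqs.get ℓ).2.1 i = x
    | _, _ => False

/-- The labelling of the labelled dependency graph: a variable vertex is labelled by its
variable, an equation vertex by the right-hand-side variable of its equation. -/
def lamΓ (Γ : Inst F ar V) : (V ⊕ Fin Γ.eqs.length) → V :=
  Sum.elim id fun ℓ => (Γ.eqs.get ℓ).2.2

/-- The source vertices of the labelled dependency graph: the variable vertices. -/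
def LSrc (Γ : Inst F ar V) : Set (V ⊕ Fin Γ.eqs.length) := Set.range Sum.inl

end NF

namespace NF

variable {F : Type} {ar : F → ℕ} {V : Type}

theorem mem_sols_div {A : Type} (Γ : Inst F ar V)
    (I : TC.Interp (Fin Γ.eqs.length) (divAr Γ) A) (a : V → A) :
    a ∈ sols (div Γ) I ↔ ∀ ℓ : Fin Γ.eqs.length,
      I ℓ (fun i => a ((Γ.eqs.get ℓ).2.1 i)) = a (Γ.eqs.get ℓ).2.2 := by
  constructor
  · intro h ℓ
    exact h ⟨ℓ, ((Γ.eqs.get ℓ).2.1, (Γ.eqs.get ℓ).2.2)⟩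
      (List.mem_map.2 ⟨ℓ, List.mem_finRange ℓ, rfl⟩)
  · intro h e he
    obtain ⟨ℓ, -, rfl⟩ := List.mem_map.1 he
    exact h ℓ

theorem Sn_le_of_forall (Γ : Inst F ar V) {n b : ℕ}
    (h : ∀ I : TC.Interp F ar (Fin n), (sols Γ I).ncard ≤ b) : Sn Γ n ≤ b := by
  refine csSup_le' ?_
  rintro m ⟨I, rfl⟩
  exact h I

section Bounds

variable [Fintype V]

theorem ncard_sols_le (Γ : Inst F ar V) {n : ℕ} (I : TC.Interp F ar (Fin n)) :
    (sols Γ I).ncard ≤ n ^ Fintype.card V := by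
  classical
  calc (sols Γ I).ncard ≤ Nat.card (V → Fin n) := Set.ncard_le_card _
    _ = n ^ Fintype.card V := by simp

theorem ncard_sols_le_Sn (Γ : Inst F ar V) {n : ℕ} (I : TC.Interp F ar (Fin n)) :
    (sols Γ I).ncard ≤ Sn Γ n := by
  refine le_csSup ⟨n ^ Fintype.card V, ?_⟩ ⟨I, rfl⟩
  rintro m ⟨J, rfl⟩
  exact ncard_sols_le Γ J

theorem Sn_le_pow (Γ : Inst F ar V) (n : ℕ) : Sn Γ n ≤ n ^ Fintype.card V :=
  Sn_le_of_forall Γ (ncard_sols_le Γ)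

theorem Sn_le_Sn_div (Γ : Inst F ar V) (n : ℕ) : Sn Γ n ≤ Sn (div Γ) n := by
  refine Sn_le_of_forall Γ fun I => ?_
  refine le_trans (Set.ncard_le_ncard ?_ (Set.toFinite _))
    (ncard_sols_le_Sn (div Γ) fun ℓ => I (Γ.eqs.get ℓ).1)
  intro a ha
  rw [mem_sols_div]
  exact fun ℓ => ha _ (List.get_mem _ _)

end Bounds

/-- All fresh symbols can be simulated at once by an interpretation of the original symbols,
provided that values carry the name of their variable as a tag. -/
theorem exists_tagged_interp {A B : Type} [Nonempty B] (Γ : Inst F ar V) (hnc : NoCollision Γ)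
    (I : TC.Interp (Fin Γ.eqs.length) (divAr Γ) A) {ι : V × A → B}
    (hι : Function.Injective ι) :
    ∃ J : TC.Interp F ar B, ∀ a ∈ sols (div Γ) I, (fun x => ι (x, a x)) ∈ sols Γ J := by
  classical
  -- `R f t y`: some tagged solution sends the arguments of an `f`-equation to `t` and its
  -- right-hand side to `y`.
  let R : (f : F) → (Fin (ar f) → B) → B → Prop := fun f t y =>
    ∃ a ∈ sols (div Γ) I, ∃ (args : Fin (ar f) → V) (j : V),
      (⟨f, (args, j)⟩ : (f : F) × ((Fin (ar f) → V) × V)) ∈ Γ.eqs ∧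
      t = (fun i => ι (args i, a (args i))) ∧ y = ι (j, a j)
  have hR : ∀ f t y y', R f t y → R f t y' → y = y' := by
    rintro f t y y' ⟨a, ha, args, j, he, rfl, rfl⟩ ⟨a', ha', args', j', he', ht, rfl⟩
    have hp : ∀ i, (args i, a (args i)) = (args' i, a' (args' i)) :=
      fun i => hι (congrFun ht i)
    have hargs : args = args' := funext fun i => congrArg Prod.fst (hp i)
    subst hargs
    obtain rfl := hnc f args j j' he he'
    have hgen : ∀ e : (f : F) × ((Fin (ar f) → V) × V), e = ⟨f, (args, j)⟩ →
        ∀ i, a (e.2.1 i) = a' (e.2.1 i) := by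
      rintro _ rfl i
      exact congrArg Prod.snd (hp i)
    obtain ⟨ℓ, hℓ⟩ := List.get_of_mem he
    have key : a (Γ.eqs.get ℓ).2.2 = a' (Γ.eqs.get ℓ).2.2 := by
      rw [← (mem_sols_div Γ I a).1 ha ℓ, ← (mem_sols_div Γ I a').1 ha' ℓ]
      congr 1
      exact funext (hgen _ hℓ)
    rw [hℓ] at key
    exact congrArg (fun z => ι (j, z)) key
  refine ⟨fun f t => if h : ∃ y, R f t y then h.choose else Classical.arbitrary B, ?_⟩
  rintro a ha ⟨f, args, j⟩ he
  have h : R f (fun i => ι (args i, a (args i))) (ι (j, a j)) :=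
    ⟨a, ha, args, j, he, rfl, rfl⟩
  have hex : ∃ y, R f (fun i => ι (args i, a (args i))) y := ⟨_, h⟩
  change (if h : ∃ y, R f (fun i => ι (args i, a (args i))) y then h.choose
    else Classical.arbitrary B) = ι (j, a j)
  rw [dif_pos hex]
  exact hR _ _ _ _ hex.choose_spec h

theorem Sn_div_le_Sn [Fintype V] [Nonempty V] (Γ : Inst F ar V) (hnc : NoCollision Γ) {m n : ℕ}
    (hn : 0 < n) (hmn : Fintype.card V * m ≤ n) : Sn (div Γ) m ≤ Sn Γ n := by
  classical
  refine Sn_le_of_forall (div Γ) fun I => ?_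
  have : Nonempty (Fin n) := ⟨⟨0, hn⟩⟩
  obtain ⟨ι⟩ : Nonempty (V × Fin m ↪ Fin n) :=
    Function.Embedding.nonempty_of_card_le (by simpa using hmn)
  obtain ⟨J, hJ⟩ := exists_tagged_interp Γ hnc I ι.injective
  refine le_trans ?_ (ncard_sols_le_Sn Γ J)
  refine Set.ncard_le_ncard_of_injOn (fun a x => ι (x, a x)) hJ ?_ (Set.toFinite _)
  intro a _ a' _ h
  funext x
  exact congrArg Prod.snd (ι.injective (congrFun h x))

end NF

namespace DiversificationSandwich

open Filter Topology

theorem log_natCast_mono {a b : ℕ} (h : a ≤ b) : Real.log a ≤ Real.log b := by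
  rcases Nat.eq_zero_or_pos a with rfl | ha
  · simpa using Real.log_natCast_nonneg b
  · exact Real.log_le_log (by exact_mod_cast ha) (by exact_mod_cast h)

theorem logb_natCast_nonneg (n a : ℕ) : 0 ≤ Real.logb n a :=
  div_nonneg (Real.log_natCast_nonneg a) (Real.log_natCast_nonneg n)

/-- Two sequences of naturals of polynomial growth that dominate each other up to rescaling the
index by a constant factor have the same growth exponent. -/
theorem limsup_logb_eq {s d : ℕ → ℕ} {k : ℕ} (hk : 0 < k) (hsd : ∀ n, 1 ≤ n → s n ≤ d n)
    (hds : ∀ m, 1 ≤ m → d m ≤ s (k * m)) (hd : ∀ n, d n ≤ n ^ k) :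
    limsup (fun n : ℕ => Real.logb n (s n)) atTop =
      limsup (fun n : ℕ => Real.logb n (d n)) atTop := by
  have hle : ∀ᶠ n : ℕ in atTop, Real.logb n (s n) ≤ Real.logb n (d n) := by
    filter_upwards [eventually_ge_atTop 1] with n hn
    exact div_le_div_of_nonneg_right (log_natCast_mono (hsd n hn)) (Real.log_natCast_nonneg n)
  have hdk : ∀ᶠ n : ℕ in atTop, Real.logb n (d n) ≤ k := by
    filter_upwards [eventually_ge_atTop 2] with n hn
    have hlog : 0 < Real.log n := Real.log_pos (by exact_mod_cast hn)
    rw [Real.logb, div_le_iff₀ hlog, ← Real.log_pow]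
    exact_mod_cast log_natCast_mono (hd n)
  have bd : IsBoundedUnder (· ≤ ·) atTop (fun n : ℕ => Real.logb n (d n)) := ⟨k, hdk⟩
  have bs : IsBoundedUnder (· ≤ ·) atTop (fun n : ℕ => Real.logb n (s n)) :=
    ⟨k, (hle.and hdk).mono fun n h => h.1.trans h.2⟩
  have cobdd : ∀ u : ℕ → ℕ,
      IsCoboundedUnder (· ≤ ·) atTop (fun n : ℕ => Real.logb n (u n)) := fun u =>
    IsBoundedUnder.isCoboundedUnder_le (isBoundedUnder_of ⟨0, fun n => logb_natCast_nonneg n _⟩)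
  refine le_antisymm (limsup_le_limsup hle (cobdd s) bd) ?_
  refine le_of_forall_gt_imp_ge_of_dense fun c hc => ?_
  obtain ⟨c', hc', hcc⟩ := exists_between hc
  have hev : ∀ᶠ n : ℕ in atTop, Real.logb n (s n) < c' := eventually_lt_of_limsup_lt hc' bs
  have hmul : Tendsto (fun m : ℕ => k * m) atTop atTop := tendsto_id.const_mul_atTop' hk
  -- The correction factor `log (k * m) / log m = 1 + log k / log m` tends to `1`.
  have hlim : Tendsto (fun m : ℕ => c' * (1 + Real.log k / Real.log m)) atTop (𝓝 c') := by
    have h0 : Tendsto (fun m : ℕ => Real.log k / Real.log m) atTop (𝓝 0) :=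
      (Real.tendsto_log_atTop.comp tendsto_natCast_atTop_atTop).const_div_atTop _
    simpa using (h0.const_add 1).const_mul c'
  refine limsup_le_of_le (cobdd d) ?_
  filter_upwards [hmul.eventually hev, hlim.eventually_lt_const hcc, eventually_ge_atTop 2]
    with m h1 h2 hm
  refine le_trans ?_ h2.le
  have hlog : 0 < Real.log m := Real.log_pos (by exact_mod_cast hm)
  have hkm : Real.log ((k * m : ℕ) : ℝ) = Real.log k + Real.log m := by
    push_cast
    exact Real.log_mul (by positivity) (by positivity)
  have hkm0 : 0 < Real.log ((k * m : ℕ) : ℝ) := by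
    rw [hkm]
    have := Real.log_natCast_nonneg k
    positivity
  rw [Real.logb, div_lt_iff₀ hkm0, hkm] at h1
  rw [Real.logb, div_le_iff₀ hlog]
  calc Real.log (d m) ≤ Real.log (s (k * m)) := log_natCast_mono (hds m (by omega))
    _ ≤ c' * (Real.log k + Real.log m) := h1.le
    _ = c' * (1 + Real.log k / Real.log m) * Real.log m := by field_simp; ring

end DiversificationSandwich

/-- **Diversification sandwich.** Let `Γnf` be a normal-form instance with
`k` variables satisfying the Term-DAG/no-collision property, and let `Γdiv` be its
diversification.  Then for every `n ≥ 1`, `S_n(Γnf) ≤ S_n(Γdiv)`; if `n ≥ k` then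
`S_n(Γnf) ≥ S_{⌊n/k⌋}(Γdiv)`; and in particular `log_n S_n(Γnf)` and `log_n S_n(Γdiv)`
have the same lim sup as `n → ∞`. -/
theorem diversification_sandwich {F : Type} {ar : F → ℕ} {V : Type}
    [Fintype V] [Nonempty V] (Γ : NF.Inst F ar V) (hnc : NF.NoCollision Γ) :
    (∀ n : ℕ, 1 ≤ n → NF.Sn Γ n ≤ NF.Sn (NF.div Γ) n) ∧
    (∀ n : ℕ, Fintype.card V ≤ n →
      NF.Sn (NF.div Γ) (n / Fintype.card V) ≤ NF.Sn Γ n) ∧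
    Filter.limsup (fun n : ℕ => Real.logb n (NF.Sn Γ n)) Filter.atTop =
      Filter.limsup (fun n : ℕ => Real.logb n (NF.Sn (NF.div Γ) n)) Filter.atTop := by
  have hk : 0 < Fintype.card V := Fintype.card_pos
  refine ⟨fun n _ => NF.Sn_le_Sn_div Γ n,
    fun n hn => NF.Sn_div_le_Sn Γ hnc (hk.trans_le hn) (Nat.mul_div_le n _), ?_⟩
  exact DiversificationSandwich.limsup_logb_eq hk (fun n _ => NF.Sn_le_Sn_div Γ n)
    (fun m hm => NF.Sn_div_le_Sn Γ hnc (Nat.mul_pos hk hm) le_rfl)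
    (NF.Sn_le_pow (NF.div Γ))
end

section
/- Convergence of guessing numbers: for every finite digraph G with source set S ⊆ V(G), and likewise for every labelled digraph (G, λ, S), the limit as n → ∞ of gn(G,S,n) exists and equals gn(G,S) := sup_{n≥2} gn(G,S,n), and the limit as n → ∞ of gn(G,λ,S,n) exists and equals gn(G,λ,S) := sup_{n≥2} gn(G,λ,S,n). -/
/-!
The unlabelled game is the labelled game with `λ = id`, so only the latter is studied.
Write `f n = W_n(G,λ,S)`. For nonempty alphabets:

* `f` is monotone (`Wl_mono`): a strategy on `A` is transported to a larger alphabet along an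
  injection of `A` and a left inverse of it;
* `f` is supermultiplicative (`Wl_mul`): two strategies can be played side by side on the
  product alphabet;
* `1 ≤ f n ≤ n ^ |X|`.

These properties alone give the limit (`tendsto_logb_sSup`): for fixed `m ≥ 2` and
`k = ⌊log_m n⌋` one has `f m ^ k ≤ f (m ^ k) ≤ f n` and `n < m ^ (k + 1)`, so
`log_n (f n) ≥ k / (k + 1) * log_m (f m)`, and `k → ∞` with `n`.
-/

namespace GG

variable {V X : Type}

/-- A configuration is winning for a strategy `g` on the digraph with edge relation `E`
and source set `S` if every non-source vertex correctly guesses its own value from the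
values of its in-neighbours. -/
def IsWinning (E : V → V → Prop) (S : Set V) {A : Type}
    (g : ∀ v : V, ({u : V // E u v} → A) → A) (a : V → A) : Prop :=
  ∀ v ∉ S, a v = g v fun u => a u.1

/-- `W_n(G,S)`: the maximum number of winning configurations over all strategies, on an
alphabet of size `n`. -/
noncomputable def W (E : V → V → Prop) (S : Set V) (n : ℕ) : ℕ :=
  sSup {m | ∃ g : ∀ v : V, ({u : V // E u v} → Fin n) → Fin n,
    m = {a : V → Fin n | IsWinning E S g a}.ncard}

/-- Winning configurations of the labelled guessing game: configurations assign values to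
labels, and every non-source vertex must guess the value of its label. -/
def IsWinningL (E : V → V → Prop) (lam : V → X) (S : Set V) {A : Type}
    (g : ∀ v : V, ({u : V // E u v} → A) → A) (a : X → A) : Prop :=
  ∀ v ∉ S, a (lam v) = g v fun u => a (lam u.1)

/-- `W_n(G,λ,S)`: the maximum number of winning configurations of the labelled guessing
game over all strategies, on an alphabet of size `n`. -/
noncomputable def Wl (E : V → V → Prop) (lam : V → X) (S : Set V) (n : ℕ) : ℕ :=
  sSup {m | ∃ g : ∀ v : V, ({u : V // E u v} → Fin n) → Fin n,
    m = {a : X → Fin n | IsWinningL E lam S g a}.ncard}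

/-- The guessing number `gn(G,S) = sup_{n ≥ 2} log_n W_n(G,S)`. -/
noncomputable def gn (E : V → V → Prop) (S : Set V) : ℝ :=
  sSup {x : ℝ | ∃ n : ℕ, 2 ≤ n ∧ x = Real.logb n (W E S n)}

/-- The labelled guessing number `gn(G,λ,S) = sup_{n ≥ 2} log_n W_n(G,λ,S)`. -/
noncomputable def gnL (E : V → V → Prop) (lam : V → X) (S : Set V) : ℝ :=
  sSup {x : ℝ | ∃ n : ℕ, 2 ≤ n ∧ x = Real.logb n (Wl E lam S n)}

end GG

namespace GG

open Filter Topology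

section Game

variable {V X : Type} [Fintype X] (E : V → V → Prop) (lam : V → X) (S : Set V)

lemma ncard_winning_le {n : ℕ} (g : ∀ v : V, ({u : V // E u v} → Fin n) → Fin n) :
    {a : X → Fin n | IsWinningL E lam S g a}.ncard ≤ n ^ Fintype.card X := by
  classical
  refine (Set.ncard_le_card _).trans ?_
  simp

lemma ncard_winning_le_Wl {n : ℕ} (g : ∀ v : V, ({u : V // E u v} → Fin n) → Fin n) :
    {a : X → Fin n | IsWinningL E lam S g a}.ncard ≤ Wl E lam S n := by
  refine le_csSup ⟨n ^ Fintype.card X, ?_⟩ ⟨g, rfl⟩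
  rintro _ ⟨g, rfl⟩
  exact ncard_winning_le E lam S g

/-- The maximum defining `Wl` is attained; `n ≥ 1` guarantees that strategies exist. -/
lemma exists_strategy {n : ℕ} (hn : 1 ≤ n) :
    ∃ g : ∀ v : V, ({u : V // E u v} → Fin n) → Fin n,
      Wl E lam S n = {a : X → Fin n | IsWinningL E lam S g a}.ncard := by
  have h : Wl E lam S n ∈ {m | ∃ g : ∀ v : V, ({u : V // E u v} → Fin n) → Fin n,
      m = {a : X → Fin n | IsWinningL E lam S g a}.ncard} := by
    refine Nat.sSup_mem ⟨_, fun _ _ => ⟨0, hn⟩, rfl⟩ ⟨n ^ Fintype.card X, ?_⟩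
    rintro _ ⟨g, rfl⟩
    exact ncard_winning_le E lam S g
  exact h

lemma Wl_le_pow {n : ℕ} (hn : 1 ≤ n) : Wl E lam S n ≤ n ^ Fintype.card X := by
  obtain ⟨g, hg⟩ := exists_strategy E lam S hn
  exact hg ▸ ncard_winning_le E lam S g

lemma one_le_Wl {n : ℕ} (hn : 1 ≤ n) : 1 ≤ Wl E lam S n := by
  -- If every vertex guesses `0`, the constant configuration `0` wins.
  refine le_trans ?_ (ncard_winning_le_Wl E lam S fun _ _ => (⟨0, hn⟩ : Fin n))
  rw [Nat.one_le_iff_ne_zero, ← Nat.pos_iff_ne_zero, Set.ncard_pos]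
  exact ⟨fun _ => ⟨0, hn⟩, fun _ _ => rfl⟩

lemma Wl_mono {m n : ℕ} (hm : 1 ≤ m) (hmn : m ≤ n) : Wl E lam S m ≤ Wl E lam S n := by
  obtain ⟨g, hg⟩ := exists_strategy E lam S hm
  have : Nonempty (Fin m) := ⟨⟨0, hm⟩⟩
  have hinj : Function.Injective (Fin.castLE hmn) := Fin.castLE_injective hmn
  have hr := Function.leftInverse_invFun hinj
  set r := Function.invFun (Fin.castLE hmn)
  rw [hg]
  refine le_trans ?_ (ncard_winning_le_Wl E lam S
    fun v b => Fin.castLE hmn (g v fun u => r (b u)))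
  refine Set.ncard_le_ncard_of_injOn (fun a x => Fin.castLE hmn (a x)) ?_ ?_ (Set.toFinite _)
  · intro a ha v hv
    simp only [hr _]
    exact congrArg _ (ha v hv)
  · intro a _ b _ hab
    exact funext fun x => hinj (congrFun hab x)

lemma Wl_mul {m n : ℕ} (hm : 1 ≤ m) (hn : 1 ≤ n) :
    Wl E lam S m * Wl E lam S n ≤ Wl E lam S (m * n) := by
  obtain ⟨g, hg⟩ := exists_strategy E lam S hm
  obtain ⟨h, hh⟩ := exists_strategy E lam S hn
  let e : Fin m × Fin n ≃ Fin (m * n) := finProdFinEquiv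
  rw [hg, hh, ← Set.ncard_prod]
  refine le_trans ?_ (ncard_winning_le_Wl E lam S
    fun v b => e (g v fun u => (e.symm (b u)).1, h v fun u => (e.symm (b u)).2))
  refine Set.ncard_le_ncard_of_injOn (fun p x => e (p.1 x, p.2 x)) ?_ ?_ (Set.toFinite _)
  · rintro ⟨a, b⟩ ⟨ha, hb⟩ v hv
    simp only [Equiv.symm_apply_apply]
    exact congrArg e (Prod.ext (ha v hv) (hb v hv))
  · rintro ⟨a, b⟩ _ ⟨a', b'⟩ _ hab
    have hx : ∀ x, (a x, b x) = (a' x, b' x) := fun x => e.injective (congrFun hab x)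
    exact Prod.ext (funext fun x => congrArg Prod.fst (hx x))
      (funext fun x => congrArg Prod.snd (hx x))

end Game

/-- A monotone supermultiplicative sequence of positive integers with polynomial growth has
`log_n (f n)` converging to its supremum over `n ≥ 2`. -/
lemma tendsto_logb_sSup (f : ℕ → ℕ) (d : ℕ) (hpos : ∀ n, 1 ≤ n → 1 ≤ f n)
    (hle : ∀ n, 1 ≤ n → f n ≤ n ^ d) (hmono : ∀ m n, 1 ≤ m → m ≤ n → f m ≤ f n)
    (hmul : ∀ m n, 1 ≤ m → 1 ≤ n → f m * f n ≤ f (m * n)) :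
    Tendsto (fun n : ℕ => Real.logb n (f n)) atTop
      (𝓝 (sSup {x : ℝ | ∃ n : ℕ, 2 ≤ n ∧ x = Real.logb n (f n)})) := by
  have hbdd : BddAbove {x : ℝ | ∃ n : ℕ, 2 ≤ n ∧ x = Real.logb n (f n)} := by
    refine ⟨d, ?_⟩
    rintro _ ⟨n, hn, rfl⟩
    have hn1 : (1 : ℝ) < n := by exact_mod_cast hn
    have hf : (0 : ℝ) < f n := by exact_mod_cast hpos n (by omega)
    rw [Real.logb_le_iff_le_rpow hn1 hf, Real.rpow_natCast]
    exact_mod_cast hle n (by omega)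
  have hpow : ∀ m k, 1 ≤ m → f m ^ k ≤ f (m ^ k) := by
    intro m k hm
    induction k with
    | zero => simpa using hpos 1 le_rfl
    | succ k ih =>
      rw [pow_succ, pow_succ]
      exact (Nat.mul_le_mul_right _ ih).trans (hmul _ _ (Nat.one_le_pow _ _ hm) hm)
  rw [tendsto_order]
  constructor
  · intro a ha
    have hne : {x : ℝ | ∃ n : ℕ, 2 ≤ n ∧ x = Real.logb n (f n)}.Nonempty :=
      ⟨_, 2, le_rfl, rfl⟩
    obtain ⟨_, ⟨m, hm, rfl⟩, hlt⟩ := exists_lt_of_lt_csSup hne ha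
    have hk : Tendsto (fun n : ℕ => Nat.log m n) atTop atTop :=
      tendsto_atTop_atTop.2 fun b => ⟨m ^ b, fun n hn =>
        (Nat.log_pow hm b).ge.trans (Nat.log_mono_right hn)⟩
    have hlim : Tendsto (fun n : ℕ => ((Nat.log m n : ℕ) : ℝ) / ((Nat.log m n : ℕ) + 1) *
        Real.logb m (f m)) atTop (𝓝 (Real.logb m (f m))) := by
      simpa using ((tendsto_natCast_div_add_atTop (1 : ℝ)).comp hk).mul_const
        (Real.logb m (f m))
    filter_upwards [hlim.eventually_const_lt hlt, eventually_ge_atTop 2] with n hn hn2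
    refine hn.trans_le ?_
    set k := Nat.log m n
    have hlow : f m ^ k ≤ f n := (hpow m k (by omega)).trans
      (hmono _ _ (Nat.one_le_pow _ _ (by omega)) (Nat.pow_log_le_self m (by omega)))
    have hup : n ≤ m ^ (k + 1) := (Nat.lt_pow_succ_log_self hm n).le
    have hlogm : 0 < Real.log m := Real.log_pos (by exact_mod_cast hm)
    have hlogn : 0 < Real.log n := Real.log_pos (by exact_mod_cast hn2)
    have hfm : (1 : ℝ) ≤ f m := by exact_mod_cast hpos m (by omega)
    have hlogf : 0 ≤ Real.log (f m) := Real.log_nonneg hfm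
    have h1 : k * Real.log (f m) ≤ Real.log (f n) := by
      rw [← Real.log_pow]
      exact Real.log_le_log (by positivity) (by exact_mod_cast hlow)
    have h2 : Real.log n ≤ (k + 1) * Real.log m := by
      have : Real.log n ≤ Real.log ((m : ℝ) ^ (k + 1)) :=
        Real.log_le_log (by positivity) (by exact_mod_cast hup)
      simpa [Real.log_pow] using this
    calc (k : ℝ) / (k + 1) * Real.logb m (f m)
        = k * Real.log (f m) / ((k + 1) * Real.log m) := by
          rw [Real.logb, div_mul_div_comm]
      _ ≤ k * Real.log (f m) / Real.log n := by gcongr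
      _ ≤ Real.log (f n) / Real.log n := by gcongr
  · intro a ha
    filter_upwards [eventually_ge_atTop 2] with n hn
    exact (le_csSup hbdd ⟨n, hn, rfl⟩).trans_lt ha

lemma tendsto_gnL {V X : Type} [Fintype X] (E : V → V → Prop) (lam : V → X) (S : Set V) :
    Tendsto (fun n : ℕ => Real.logb n (Wl E lam S n)) atTop (𝓝 (gnL E lam S)) :=
  tendsto_logb_sSup (Wl E lam S) (Fintype.card X) (fun _ => one_le_Wl E lam S)
    (fun _ => Wl_le_pow E lam S) (fun _ _ => Wl_mono E lam S) (fun _ _ => Wl_mul E lam S)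

end GG

/-- **Convergence of guessing numbers.** For every finite digraph `G` with
source set `S ⊆ V(G)`, and likewise for every labelled digraph `(G, λ, S)`, the limit as
`n → ∞` of `gn(G,S,n) = log_n W_n(G,S)` exists and equals
`gn(G,S) := sup_{n≥2} gn(G,S,n)`, and the limit as `n → ∞` of `gn(G,λ,S,n)` exists and
equals `gn(G,λ,S) := sup_{n≥2} gn(G,λ,S,n)`. -/
theorem guessing_number_converges {V X : Type} [Fintype V] [Fintype X]
    (E : V → V → Prop) (S : Set V) (lam : V → X) (hlam : Function.Surjective lam) :
    Filter.Tendsto (fun n : ℕ => Real.logb n (GG.W E S n)) Filter.atTop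
      (nhds (GG.gn E S)) ∧
    Filter.Tendsto (fun n : ℕ => Real.logb n (GG.Wl E lam S n)) Filter.atTop
      (nhds (GG.gnL E lam S)) := by
  -- With `λ = id` the labelled game unfolds to the unlabelled one.
  exact ⟨GG.tendsto_gnL E id S, GG.tendsto_gnL E lam S⟩
end

section
/- Let Γ^div be a diversified normal-form instance in functional normal form, let G_Γ be its dependency digraph and Src(Γ^div) its set of source variables. Then for every n ≥ 1, S_n(Γ^div) = W_n(G_Γ, Src(Γ^div)). -/
namespace NF

variable {F : Type} {ar : F → ℕ} {V : Type}

/-- Winning, stated equation by equation: the non-source vertices are exactly the right-hand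
sides. -/
lemma isWinning_iff (Γ : Inst F ar V) {A : Type}
    (g : ∀ v : V, ({u : V // DepE Γ u v} → A) → A) (a : V → A) :
    GG.IsWinning (DepE Γ) (Src Γ) g a ↔
      ∀ e ∈ Γ.eqs, a e.2.2 = g e.2.2 fun u => a u.1 := by
  constructor
  · intro h e he
    exact h _ fun hs => hs e he rfl
  · intro h v hv
    simp only [Src, Set.mem_ofPred_eq, not_forall, not_not] at hv
    obtain ⟨e, he, rfl⟩ := hv
    exact h e he

lemma exists_strategy (Γ : Inst F ar V) (hfnf : FNF Γ) {A : Type} [Nonempty A]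
    (I : TC.Interp F ar A) :
    ∃ g : ∀ v : V, ({u : V // DepE Γ u v} → A) → A,
      {a | GG.IsWinning (DepE Γ) (Src Γ) g a} = sols Γ I := by
  classical
  refine ⟨fun v x => if h : ∃ e ∈ Γ.eqs, e.2.2 = v then
    I h.choose.1 (fun i => x ⟨h.choose.2.1 i,
      h.choose, h.choose_spec.1, ⟨i, rfl⟩, h.choose_spec.2⟩)
    else Classical.arbitrary A, ?_⟩
  ext a
  rw [Set.mem_ofPred_eq, isWinning_iff]
  refine forall₂_congr fun e he => ?_
  have h : ∃ e' ∈ Γ.eqs, e'.2.2 = e.2.2 := ⟨e, he, rfl⟩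
  rw [dif_pos h]
  have key : h.choose = e := hfnf _ h.choose_spec.1 _ he h.choose_spec.2
  have key2 : I h.choose.1 (fun i => a (h.choose.2.1 i)) = I e.1 (fun i => a (e.2.1 i)) := by
    rw [key]
  rw [← key2]
  exact eq_comm

lemma exists_interp (Γ : Inst F ar V) (hdiv : Diversified Γ) (hfnf : FNF Γ) {A : Type}
    [Nonempty A] (g : ∀ v : V, ({u : V // DepE Γ u v} → A) → A) :
    ∃ I : TC.Interp F ar A,
      (sols Γ I).ncard = {a | GG.IsWinning (DepE Γ) (Src Γ) g a}.ncard := by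
  classical
  obtain ⟨z⟩ := ‹Nonempty A›
  -- The relabelling: at a constant vertex, swap its guess with `z`.
  let σ : V → Equiv.Perm A := fun v =>
    if ∃ e ∈ Γ.eqs, e.2.2 = v ∧ ar e.1 = 0 then Equiv.swap (g v fun _ => z) z else 1
  let I : TC.Interp F ar A := fun f b =>
    if h : 0 < ar f ∧ ∃ p : (Fin (ar f) → V) × V, Sigma.mk f p ∈ Γ.eqs then
      g h.2.choose.2 fun u =>
        σ u.1 (if hi : ∃ i, h.2.choose.1 i = u.1 then b hi.choose else z)
    else z
  -- `a` solves the equations iff its relabelling wins.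
  have main : ∀ a : V → A, a ∈ sols Γ I ↔
      GG.IsWinning (DepE Γ) (Src Γ) g fun v => σ v (a v) := by
    intro a
    rw [isWinning_iff]
    refine forall₂_congr fun e he => ?_
    obtain ⟨f, p⟩ := e
    rcases Nat.eq_zero_or_pos (ar f) with h0 | hpos
    · have hI : I f (fun i => a (p.1 i)) = z := dif_neg fun h => by omega
      have hσ : σ p.2 = Equiv.swap (g p.2 fun _ => z) z := if_pos ⟨_, he, rfl, h0⟩
      -- A constant vertex has no in-neighbours, so its guess does not depend on `a`.
      have hg : (fun u : {u : V // DepE Γ u p.2} => σ u.1 (a u.1)) = fun _ => z := by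
        funext ⟨u, e', he', ⟨i, _⟩, h2⟩
        have := hfnf _ he' _ he h2
        subst this
        exact absurd i.2 (by simp [h0])
      change I f (fun i => a (p.1 i)) = a p.2 ↔ σ p.2 (a p.2) = _
      rw [hI, hg, hσ, Equiv.swap_apply_eq_iff, Equiv.swap_apply_left]
      exact eq_comm
    · have h : 0 < ar f ∧ ∃ p : (Fin (ar f) → V) × V, Sigma.mk f p ∈ Γ.eqs :=
        ⟨hpos, p, he⟩
      have hp : h.2.choose = p := by
        have := hdiv _ he _ h.2.choose_spec hpos rfl
        exact (eq_of_heq (Sigma.mk.inj this).2).symm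
      have hI : I f (fun i => a (p.1 i)) = g p.2 fun u => σ u.1 (a u.1) := by
        have h1 : I f (fun i => a (p.1 i)) = g h.2.choose.2 fun u =>
            σ u.1 (if hi : ∃ i, h.2.choose.1 i = u.1 then a (p.1 hi.choose) else z) :=
          dif_pos h
        rw [h1]
        generalize h.2.choose = q at hp
        subst hp
        congr 1
        funext ⟨u, e', he', ⟨i, hi⟩, h2⟩
        have := hfnf _ he' _ he h2
        subst this
        have hex : ∃ i, q.1 i = u := ⟨i, hi⟩
        rw [dif_pos hex, hex.choose_spec]
      have hσ : σ p.2 = 1 := by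
        refine if_neg ?_
        rintro ⟨e', he', h2, h0⟩
        have := hfnf _ he' _ he h2
        subst this
        simp only at h0
        omega
      change I f (fun i => a (p.1 i)) = a p.2 ↔ σ p.2 (a p.2) = _
      rw [hI, hσ, Equiv.Perm.one_apply]
      exact eq_comm
  refine ⟨I, Set.ncard_congr (fun a _ v => σ v (a v)) (fun a ha => (main a).1 ha) ?_ ?_⟩
  · intro a b _ _ hab
    funext v
    exact (σ v).injective (congrFun hab v)
  · intro b hb
    refine ⟨fun v => (σ v).symm (b v), ?_, ?_⟩
    · rw [main]
      simpa using hb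
    · simp

end NF

/-- **Diversified functional instances are guessing games.** Let `Γdiv` be
a diversified normal-form instance in functional normal form, let `G_Γ` be its dependency
digraph and `Src(Γdiv)` its set of source variables.  Then for every `n ≥ 1`,
`S_n(Γdiv) = W_n(G_Γ, Src(Γdiv))`. -/
theorem diversified_fnf_is_guessing_game {F : Type} {ar : F → ℕ} {V : Type} [Fintype V]
    (Γ : NF.Inst F ar V) (hdiv : NF.Diversified Γ) (hfnf : NF.FNF Γ)
    (n : ℕ) (hn : 1 ≤ n) :
    NF.Sn Γ n = GG.W (NF.DepE Γ) (NF.Src Γ) n := by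
  have : Nonempty (Fin n) := ⟨⟨0, hn⟩⟩
  unfold NF.Sn GG.W
  congr 1
  ext m
  constructor
  · rintro ⟨I, rfl⟩
    obtain ⟨g, hg⟩ := NF.exists_strategy Γ hfnf I
    exact ⟨g, by rw [hg]⟩
  · rintro ⟨g, rfl⟩
    obtain ⟨I, hI⟩ := NF.exists_interp Γ hdiv hfnf g
    exact ⟨I, hI.symm⟩
end

section
/- Let Γ^div be a diversified normal-form instance (not necessarily in functional normal form) with dependency digraph G_Γ and source set Src(Γ^div). Then for every n ≥ 1, S_n(Γ^div) ≤ W_n(G_Γ, Src(Γ^div)). -/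
/-- Every code is contained in the winning set of a single strategy, obtained by choosing one
defining equation for each non-source variable. -/
theorem NF.exists_strategy_s10 {F : Type} {ar : F → ℕ} {V A : Type} [Nonempty A]
    (Γ : NF.Inst F ar V) (I : TC.Interp F ar A) :
    ∃ g : ∀ v : V, ({u : V // NF.DepE Γ u v} → A) → A,
      NF.sols Γ I ⊆ {a | GG.IsWinning (NF.DepE Γ) (NF.Src Γ) g a} := by
  classical
  have key : ∀ v : V, ∃ gv : ({u : V // NF.DepE Γ u v} → A) → A,
      v ∉ NF.Src Γ → ∀ a ∈ NF.sols Γ I, a v = gv fun u => a u.1 := by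
    intro v
    by_cases hv : v ∈ NF.Src Γ
    · exact ⟨fun _ => Classical.arbitrary A, fun h => absurd hv h⟩
    · obtain ⟨e, he, hev⟩ : ∃ e ∈ Γ.eqs, e.2.2 = v := by
        simpa [NF.Src] using hv
      refine ⟨fun b => I e.1 fun i => b ⟨e.2.1 i, e, he, ⟨i, rfl⟩, hev⟩, fun _ a ha => ?_⟩
      exact (congrArg a hev).symm.trans (ha e he).symm
  choose g hg using key
  exact ⟨g, fun a ha v hv => hg v hv a ha⟩

/-- **Unlabelled upper bound for non-functional instances.** Let `Γdiv` be
a diversified normal-form instance (not necessarily in functional normal form) with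
dependency digraph `G_Γ` and source set `Src(Γdiv)`.  Then for every `n ≥ 1`,
`S_n(Γdiv) ≤ W_n(G_Γ, Src(Γdiv))`. -/
theorem diversified_unlabelled_upper_bound {F : Type} {ar : F → ℕ} {V : Type} [Fintype V]
    (Γ : NF.Inst F ar V) (hdiv : NF.Diversified Γ) (n : ℕ) (hn : 1 ≤ n) :
    NF.Sn Γ n ≤ GG.W (NF.DepE Γ) (NF.Src Γ) n := by
  have : Nonempty (Fin n) := ⟨⟨0, hn⟩⟩
  -- The set defining `W` is bounded, so its supremum in `ℕ` is not the junk value `0`.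
  have hbdd : BddAbove {m | ∃ g : ∀ v : V, ({u : V // NF.DepE Γ u v} → Fin n) → Fin n,
      m = {a : V → Fin n | GG.IsWinning (NF.DepE Γ) (NF.Src Γ) g a}.ncard} := by
    refine ⟨Nat.card (V → Fin n), ?_⟩
    rintro m ⟨g, rfl⟩
    exact Set.ncard_le_card _
  refine csSup_le ⟨_, fun _ _ => ⟨0, hn⟩, rfl⟩ ?_
  rintro m ⟨I, rfl⟩
  obtain ⟨g, hg⟩ := NF.exists_strategy_s10 Γ I
  exact (Set.ncard_le_ncard hg (Set.toFinite _)).trans (le_csSup hbdd ⟨g, rfl⟩)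
end

section
/- Generalised guessing-number sandwich theorem (labelled form): let Γ be a Term Coding instance, let Γ^nf be a normal-form instance with the Term-DAG/no-collision property equivalent to Γ (i.e. S_n(Γ^nf) = S_n(Γ) for all n) on k variables, let Γ^div be its diversification, and let (G̃_Γ, λ_Γ, S_Γ) be the labelled dependency graph of Γ^div. Then for every n ≥ k, W_{⌊n/k⌋}(G̃_Γ, λ_Γ, S_Γ) ≤ S_n(Γ) ≤ W_n(G̃_Γ, λ_Γ, S_Γ). -/
/-! The diversified graph guesses the right-hand side of each equation separately, so each
interpretation is a strategy winning on all of its solutions (`exists_strategy`); this is the upper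
bound. For the lower bound, with `m = ⌊n/k⌋`, embed (variables) × (alphabet of size `m`) into the
alphabet of size `n` and tag each value of a winning configuration by its variable. The tags on the
arguments of a symbol reveal the argument tuple, hence by the no-collision property the
right-hand-side variable, so one interpretation can simulate the whole strategy (`exists_interp`).
Both maps between winning configurations and solutions are injective. -/

namespace TC

/-- Terms over a signature given by a type `F` of function symbols with arities `ar`
(0-ary symbols are constants), with variables from `V`. -/
inductive Term (F : Type) (ar : F → ℕ) (V : Type) : Type where
  | var : V → Term F ar V
  | app : (f : F) → (Fin (ar f) → Term F ar V) → Term F ar V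

variable {F : Type} {ar : F → ℕ} {V : Type}

/-- Evaluation of a term under an interpretation and an assignment of the variables. -/
def Term.eval {A : Type} (I : Interp F ar A) (a : V → A) : Term F ar V → A
  | .var v => a v
  | .app f ts => I f fun i => (ts i).eval I a

/-- A Term Coding instance: a finite list of equations between terms. -/
structure Instance (F : Type) (ar : F → ℕ) (V : Type) : Type where
  eqs : List (Term F ar V × Term F ar V)

/-- The code (solution set) of an interpretation: the set of assignments satisfying
every equation of the instance. -/
def sols {A : Type} (Γ : Instance F ar V) (I : Interp F ar A) : Set (V → A) :=
  {a | ∀ e ∈ Γ.eqs, e.1.eval I a = e.2.eval I a}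

/-- The maximum code size `S_n(Γ)` over all interpretations on an `n`-element alphabet. -/
noncomputable def Sn (Γ : Instance F ar V) (n : ℕ) : ℕ :=
  sSup {m | ∃ I : Interp F ar (Fin n), m = (sols Γ I).ncard}

/-- An equation is in normal form if it has the shape `f(x_{i_1},…,x_{i_k}) = x_j`
(constants are the case `ar f = 0`). -/
def IsNormalEq (e : Term F ar V × Term F ar V) : Prop :=
  ∃ (f : F) (args : Fin (ar f) → V) (j : V),
    e = (Term.app f fun i => Term.var (args i), Term.var j)

/-- An instance is in normal form if every equation is. -/
def IsNormalForm (Γ : Instance F ar V) : Prop := ∀ e ∈ Γ.eqs, IsNormalEq e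

/-- Term-DAG / no-collision property: distinct equations using the same function symbol
have distinct ordered argument tuples (for constants: at most one constant equation). -/
def NoCollision (Γ : Instance F ar V) : Prop :=
  ∀ (f : F) (args : Fin (ar f) → V) (j j' : V),
    ((Term.app f fun i => Term.var (args i), Term.var j) ∈ Γ.eqs) →
    ((Term.app f fun i => Term.var (args i), Term.var j') ∈ Γ.eqs) → j = j'

/-- Renaming the variables of a term. -/
def Term.rename {W : Type} (g : V → W) : Term F ar V → Term F ar W
  | .var v => .var (g v)
  | .app f ts => .app f fun i => (ts i).rename g

end TC

namespace Sandwich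

open NF GG

variable {F : Type} {ar : F → ℕ} {V : Type}

lemma div_get (Γ : Inst F ar V) {p : ℕ} (hp : p < Γ.eqs.length)
    (hq : p < (div Γ).eqs.length) :
    (div Γ).eqs.get ⟨p, hq⟩ =
      ⟨⟨p, hp⟩, ((Γ.eqs.get ⟨p, hp⟩).2.1, (Γ.eqs.get ⟨p, hp⟩).2.2)⟩ := by
  let φ : Fin Γ.eqs.length →
      ((ℓ : Fin Γ.eqs.length) × ((Fin (divAr Γ ℓ) → V) × V)) :=
    fun ℓ => ⟨ℓ, ((Γ.eqs.get ℓ).2.1, (Γ.eqs.get ℓ).2.2)⟩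
  have hp' : p < (List.finRange Γ.eqs.length).length := by simpa using hp
  have h1 : (List.finRange Γ.eqs.length)[p] = ⟨p, hp⟩ := by simp
  have h2 : (div Γ).eqs.get ⟨p, hq⟩ = φ (List.finRange Γ.eqs.length)[p] :=
    List.getElem_map φ
  rw [h2, h1]

lemma exists_vertex_of_mem (Γ : Inst F ar V) {f : F} {args : Fin (ar f) → V} {j : V}
    (he : (⟨f, (args, j)⟩ : (f : F) × ((Fin (ar f) → V) × V)) ∈ Γ.eqs) :
    ∃ q : Fin (div Γ).eqs.length, lamΓ (div Γ) (Sum.inr q) = j ∧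
      ∀ u, LDepE (div Γ) u (Sum.inr q) → ∃ i, lamΓ (div Γ) u = args i := by
  obtain ⟨p, hp, hpe⟩ := List.mem_iff_getElem.1 he
  have hq : p < (div Γ).eqs.length := by simpa [div] using hp
  have key : (div Γ).eqs.get ⟨p, hq⟩ =
      ⟨⟨p, hp⟩, ((Γ.eqs.get ⟨p, hp⟩).2.1, (Γ.eqs.get ⟨p, hp⟩).2.2)⟩ :=
    div_get Γ hp hq
  have hpe' : Γ.eqs.get ⟨p, hp⟩ = ⟨f, (args, j)⟩ := by simpa using hpe
  refine ⟨⟨p, hq⟩, ?_, ?_⟩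
  · simp only [lamΓ, Sum.elim_inr]
    rw [key]
    simp only
    rw [hpe']
  · rintro (x | x) hx
    · simp only [LDepE] at hx
      rw [key] at hx
      obtain ⟨i, hi⟩ := hx
      have h2 : ∃ i, (Γ.eqs.get ⟨p, hp⟩).2.1 i = x := ⟨i, hi⟩
      rw [hpe'] at h2
      obtain ⟨i', hi'⟩ := h2
      exact ⟨i', hi'.symm⟩
    · exact hx.elim

lemma exists_mem_of_vertex (Γ : Inst F ar V) (q : Fin (div Γ).eqs.length) :
    ∃ e ∈ Γ.eqs, lamΓ (div Γ) (Sum.inr q) = e.2.2 ∧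
      ∀ i, LDepE (div Γ) (Sum.inl (e.2.1 i)) (Sum.inr q) := by
  obtain ⟨p, hq⟩ := q
  have hp : p < Γ.eqs.length := by simpa [div] using hq
  have key : (div Γ).eqs.get ⟨p, hq⟩ =
      ⟨⟨p, hp⟩, ((Γ.eqs.get ⟨p, hp⟩).2.1, (Γ.eqs.get ⟨p, hp⟩).2.2)⟩ :=
    div_get Γ hp hq
  refine ⟨Γ.eqs.get ⟨p, hp⟩, List.get_mem _ _, ?_, ?_⟩
  · simp only [lamΓ, Sum.elim_inr]
    rw [key]
  · intro i
    simp only [LDepE]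
    rw [key]
    exact ⟨i, rfl⟩

/-- On winning configurations, the right-hand side of each equation is a function of the values
of its arguments. -/
lemma winning_determined (Γ : Inst F ar V) {A : Type}
    {g : ∀ v, ({u // LDepE (div Γ) u v} → A) → A} {f : F} {args : Fin (ar f) → V} {j : V}
    (he : (⟨f, (args, j)⟩ : (f : F) × ((Fin (ar f) → V) × V)) ∈ Γ.eqs) {a b : V → A}
    (ha : IsWinningL (LDepE (div Γ)) (lamΓ (div Γ)) (LSrc (div Γ)) g a)
    (hb : IsWinningL (LDepE (div Γ)) (lamΓ (div Γ)) (LSrc (div Γ)) g b)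
    (hab : ∀ i, a (args i) = b (args i)) : a j = b j := by
  obtain ⟨q, hq, hu⟩ := exists_vertex_of_mem Γ he
  have hs : (Sum.inr q : V ⊕ Fin (div Γ).eqs.length) ∉ LSrc (div Γ) := by simp [LSrc]
  rw [← hq, ha _ hs, hb _ hs]
  congr 1
  funext u
  obtain ⟨i, hi⟩ := hu u.1 u.2
  rw [hi, hab i]

/-- Encode the values of a winning configuration as pairs (variable, value) inside `B`. By the
no-collision property such pairs identify the equation being evaluated, so a single interpretation
satisfies all encoded winning configurations. -/
lemma exists_interp (Γ : Inst F ar V) (hnc : NoCollision Γ) {A B : Type} [Nonempty B]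
    (g : ∀ v, ({u // LDepE (div Γ) u v} → A) → A) (emb : V × A ↪ B) :
    ∃ I : TC.Interp F ar B, ∀ a : V → A,
      IsWinningL (LDepE (div Γ)) (lamΓ (div Γ)) (LSrc (div Γ)) g a →
        (fun x => emb (x, a x)) ∈ NF.sols Γ I := by
  classical
  let P (f : F) (t : Fin (ar f) → B) (y : B) : Prop :=
    ∃ (args : Fin (ar f) → V) (j : V) (a : V → A),
      (⟨f, (args, j)⟩ : (f : F) × ((Fin (ar f) → V) × V)) ∈ Γ.eqs ∧
      IsWinningL (LDepE (div Γ)) (lamΓ (div Γ)) (LSrc (div Γ)) g a ∧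
      (∀ i, t i = emb (args i, a (args i))) ∧ y = emb (j, a j)
  refine ⟨fun f t => Classical.epsilon (P f t), ?_⟩
  rintro a ha ⟨f, args, j⟩ he
  have hex : ∃ y, P f (fun i => emb (args i, a (args i))) y :=
    ⟨_, args, j, a, he, ha, fun _ => rfl, rfl⟩
  obtain ⟨args', j', a', he', ha', ht, hy⟩ := Classical.epsilon_spec hex
  have hpair : ∀ i, args i = args' i ∧ a (args i) = a' (args' i) := fun i =>
    Prod.mk.injEq _ _ _ _ ▸ emb.injective (ht i)
  obtain rfl : args = args' := funext fun i => (hpair i).1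
  obtain rfl : j = j' := hnc f args j j' he he'
  have hj : a j = a' j := winning_determined Γ he ha ha' fun i => (hpair i).2
  change Classical.epsilon (P f fun i => emb (args i, a (args i))) = emb (j, a j)
  rw [hy, hj]

/-- The strategy that lets each equation vertex evaluate its equation wins on every solution. -/
lemma exists_strategy (Γ : Inst F ar V) {A : Type} [Nonempty A] (I : TC.Interp F ar A) :
    ∃ g : ∀ v, ({u // LDepE (div Γ) u v} → A) → A, ∀ a ∈ NF.sols Γ I,
      IsWinningL (LDepE (div Γ)) (lamΓ (div Γ)) (LSrc (div Γ)) g a := by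
  choose e he hlam hdep using exists_mem_of_vertex Γ
  refine ⟨fun v => match v with
    | Sum.inl _ => fun _ => Classical.arbitrary A
    | Sum.inr q => fun h => I (e q).1 fun i => h ⟨Sum.inl ((e q).2.1 i), hdep q i⟩, ?_⟩
  rintro a ha (x | q) hv
  · exact absurd ⟨x, rfl⟩ hv
  · rw [hlam]
    exact (ha _ (he q)).symm

/-- A bound between two maxima of cardinalities follows from termwise bounds, since all the sets
counted on the right lie in one finite type. -/
lemma sSup_ncard_le {α β C D : Type} [Finite D] [Nonempty α] (s : α → Set C) (t : β → Set D)
    (h : ∀ x, ∃ y, (s x).ncard ≤ (t y).ncard) :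
    sSup {m | ∃ x, m = (s x).ncard} ≤ sSup {m | ∃ y, m = (t y).ncard} := by
  refine csSup_le ⟨_, Classical.arbitrary α, rfl⟩ ?_
  rintro _ ⟨x, rfl⟩
  obtain ⟨y, hy⟩ := h x
  refine hy.trans (le_csSup ⟨Nat.card D, ?_⟩ ⟨y, rfl⟩)
  rintro _ ⟨z, rfl⟩
  exact Set.ncard_le_card _

end Sandwich

/-- **Generalised guessing-number sandwich theorem, labelled form.**
Let `Γ` be a Term Coding instance, let `Γnf` be a normal-form instance with the
Term-DAG/no-collision property equivalent to `Γ` (i.e. `S_n(Γnf) = S_n(Γ)` for all `n`)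
on `k` variables, let `Γdiv` be its diversification, and let `(G̃_Γ, λ_Γ, S_Γ)` be the
labelled dependency graph of `Γdiv`.  Then for every `n ≥ k`,
`W_{⌊n/k⌋}(G̃_Γ, λ_Γ, S_Γ) ≤ S_n(Γ) ≤ W_n(G̃_Γ, λ_Γ, S_Γ)`. -/
theorem sandwich_labelled {F : Type} {ar : F → ℕ} {V : Type} [Fintype V]
    {F' : Type} {ar' : F' → ℕ} {V' : Type} [Fintype V'] [Nonempty V']
    (Γ : TC.Instance F ar V) (Γnf : NF.Inst F' ar' V')
    (heqv : ∀ n : ℕ, NF.Sn Γnf n = TC.Sn Γ n)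
    (hnc : NF.NoCollision Γnf)
    (n : ℕ) (hn : Fintype.card V' ≤ n) :
    GG.Wl (NF.LDepE (NF.div Γnf)) (NF.lamΓ (NF.div Γnf)) (NF.LSrc (NF.div Γnf))
        (n / Fintype.card V') ≤ TC.Sn Γ n ∧
    TC.Sn Γ n ≤
      GG.Wl (NF.LDepE (NF.div Γnf)) (NF.lamΓ (NF.div Γnf)) (NF.LSrc (NF.div Γnf)) n := by
  have hk : 0 < Fintype.card V' := Fintype.card_pos
  have hm : 0 < n / Fintype.card V' := Nat.div_pos hn hk
  have : Nonempty (Fin n) := ⟨⟨0, hk.trans_le hn⟩⟩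
  have : Nonempty (Fin (n / Fintype.card V')) := ⟨⟨0, hm⟩⟩
  rw [← heqv n]
  constructor
  · have hcard : Fintype.card (V' × Fin (n / Fintype.card V')) ≤ Fintype.card (Fin n) := by
      simpa using Nat.mul_div_le n (Fintype.card V')
    obtain ⟨emb⟩ := Function.Embedding.nonempty_of_card_le hcard
    refine Sandwich.sSup_ncard_le _ (fun I : TC.Interp F' ar' (Fin n) => NF.sols Γnf I) fun g => ?_
    obtain ⟨I, hI⟩ := Sandwich.exists_interp Γnf hnc g emb
    refine ⟨I, Set.ncard_le_ncard_of_injOn (fun a x => emb (x, a x)) hI ?_ (Set.toFinite _)⟩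
    intro a _ b _ hab
    funext x
    exact (Prod.mk.inj (emb.injective (congrFun hab x))).2
  · refine Sandwich.sSup_ncard_le (fun I : TC.Interp F' ar' (Fin n) => NF.sols Γnf I) _ fun I => ?_
    obtain ⟨g, hg⟩ := Sandwich.exists_strategy Γnf I
    exact ⟨g, Set.ncard_le_ncard hg (Set.toFinite _)⟩
end

section
/- Exponent and o(1)-tight asymptotics: let Γ be a Term Coding instance, let Γ^nf be a normal-form instance with the Term-DAG/no-collision property equivalent to Γ (i.e. S_n(Γ^nf) = S_n(Γ) for all n) on k variables, let Γ^div be its diversification and (G̃_Γ, λ_Γ, S_Γ) the labelled dependency graph of Γ^div, and set α(Γ) := gn(G̃_Γ, λ_Γ, S_Γ). Then log_n S_n(Γ) → α(Γ) as n → ∞; in particular the limit lim_{n→∞} log_n S_n(Γ) exists and equals α(Γ). Moreover, if Γ^nf is in functional normal form, then α(Γ) = gn(G_Γ, Src(Γ^nf)) where G_Γ is the unlabelled dependency digraph. -/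
/-! ### Dependent sets and code sizes -/

namespace NF

variable {F : Type} {ar : F → ℕ} {V : Type}

/-- A set `C` of assignments is dependent if on `C`, for each equation, the values of the argument
variables determine the value of the right-hand-side variable. -/
def Dep {A : Type} (Γ : Inst F ar V) (C : Set (V → A)) : Prop :=
  ∀ e ∈ Γ.eqs, ∀ a ∈ C, ∀ b ∈ C, (∀ i, a (e.2.1 i) = b (e.2.1 i)) → a e.2.2 = b e.2.2

theorem dep_div {A : Type} (Γ : Inst F ar V) (C : Set (V → A)) : Dep (div Γ) C ↔ Dep Γ C := by
  constructor
  · intro h e he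
    obtain ⟨ℓ, rfl⟩ := List.get_of_mem he
    exact h ⟨ℓ, ((Γ.eqs.get ℓ).2.1, (Γ.eqs.get ℓ).2.2)⟩
      (List.mem_map.2 ⟨ℓ, List.mem_finRange ℓ, rfl⟩)
  · intro h e he
    obtain ⟨ℓ, -, rfl⟩ := List.mem_map.1 he
    exact h _ (List.get_mem _ ℓ)

theorem dep_sols {A : Type} (Γ : Inst F ar V) (I : TC.Interp F ar A) : Dep Γ (sols Γ I) := by
  intro e he a ha b hb hab
  rw [← ha e he, ← hb e he]
  exact congrArg _ (funext hab)

theorem bddAbove_ncard {V : Type} [Finite V] (n : ℕ) {ι : Type} (S : ι → Set (V → Fin n)) :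
    BddAbove {m | ∃ i, m = (S i).ncard} := by
  refine ⟨Nat.card (V → Fin n), ?_⟩
  rintro _ ⟨i, rfl⟩
  exact Set.ncard_le_card (S i)

theorem exists_Dep_Sn [Finite V] (Γ : Inst F ar V) {n : ℕ} (hn : 0 < n) :
    ∃ C : Set (V → Fin n), Dep Γ C ∧ Sn Γ n = C.ncard := by
  obtain ⟨I, hI⟩ := Nat.sSup_mem (s := {m | ∃ I : TC.Interp F ar (Fin n), m = (sols Γ I).ncard})
    ⟨_, fun _ _ => ⟨0, hn⟩, rfl⟩ (bddAbove_ncard n _)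
  exact ⟨_, dep_sols Γ I, hI⟩

/-- The block construction: `ι` places a disjoint copy of the alphabet `A` inside `Fin n` for each
variable, and the copies in which the arguments lie identify the equation to be satisfied. -/
theorem ncard_le_Sn [Finite V] {Γ : Inst F ar V} (hnc : NoCollision Γ) {n : ℕ} (hn : 0 < n)
    {A : Type} {C : Set (V → A)} (hC : Dep Γ C) (ι : V × A ↪ Fin n) : C.ncard ≤ Sn Γ n := by
  classical
  -- `f` is evaluated by looking for an equation and an `a ∈ C` that produce the given arguments.
  let P : (f : F) → (Fin (ar f) → Fin n) → Fin n → Prop := fun f x y =>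
    ∃ (args : Fin (ar f) → V) (j : V) (a : V → A),
      (⟨f, (args, j)⟩ : (f : F) × ((Fin (ar f) → V) × V)) ∈ Γ.eqs ∧ a ∈ C ∧
        (x = fun i => ι (args i, a (args i))) ∧ y = ι (j, a j)
  let I : TC.Interp F ar (Fin n) := fun f x =>
    if h : ∃ y, P f x y then h.choose else ⟨0, hn⟩
  let φ : (V → A) → (V → Fin n) := fun a v => ι (v, a v)
  have hφ : Function.Injective φ := fun a b h => funext fun v => by
    have := ι.injective (congrFun h v)
    exact (Prod.mk.inj this).2
  have hsub : φ '' C ⊆ sols Γ I := by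
    rintro _ ⟨a, ha, rfl⟩ ⟨f, args, j⟩ he
    have hex : ∃ y, P f (fun i => φ a (args i)) y := ⟨_, args, j, a, he, ha, rfl, rfl⟩
    have hI : I f (fun i => φ a (args i)) = hex.choose := dif_pos hex
    obtain ⟨args', j', b, he', hb, hx, hy⟩ := hex.choose_spec
    have hargs : ∀ i, args i = args' i ∧ a (args i) = b (args' i) := fun i =>
      Prod.mk.inj (ι.injective (congrFun hx i))
    obtain rfl : args = args' := funext fun i => (hargs i).1
    obtain rfl : j = j' := hnc f args j j' he he'
    have hab : a j = b j := hC _ he a ha b hb fun i => (hargs i).2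
    change I f (fun i => φ a (args i)) = ι (j, a j)
    rw [hI, hy, hab]
  calc C.ncard = (φ '' C).ncard := (Set.ncard_image_of_injective C hφ).symm
    _ ≤ (sols Γ I).ncard := Set.ncard_le_ncard hsub
    _ ≤ Sn Γ n := le_csSup (bddAbove_ncard n _) ⟨I, rfl⟩

/-- The `t`-th power of a set of assignments, over the alphabet of `t`-tuples. -/
def power {A : Type} (C : Set (V → A)) (t : ℕ) : Set (V → Fin t → A) :=
  {a | ∀ i, (fun v => a v i) ∈ C}

theorem Dep.power {A : Type} {Γ : Inst F ar V} {C : Set (V → A)} (hC : Dep Γ C) (t : ℕ) :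
    Dep Γ (power C t) := fun e he _ ha _ hb hab => funext fun i =>
  hC e he _ (ha i) _ (hb i) fun p => congrFun (hab p) i

theorem ncard_power {A : Type} (C : Set (V → A)) (t : ℕ) : (power C t).ncard = C.ncard ^ t := by
  let e : power C t ≃ (Fin t → C) :=
    { toFun := fun a i => ⟨fun v => a.1 v i, a.2 i⟩
      invFun := fun c => ⟨fun v i => (c i).1 v, fun i => (c i).2⟩
      left_inv := fun _ => rfl
      right_inv := fun _ => rfl }
  rw [← Nat.card_coe_set_eq, Nat.card_congr e, Nat.card_fun, Nat.card_coe_set_eq, Nat.card_fin]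

theorem pow_ncard_le_Sn [Fintype V] {Γ : Inst F ar V} (hnc : NoCollision Γ) {n m t : ℕ}
    (hn : 0 < n) {C : Set (V → Fin m)} (hC : Dep Γ C) (h : Fintype.card V * m ^ t ≤ n) :
    C.ncard ^ t ≤ Sn Γ n := by
  classical
  obtain ⟨ι⟩ := Function.Embedding.nonempty_of_card_le (α := V × (Fin t → Fin m)) (β := Fin n)
    (by simpa using h)
  rw [← ncard_power]
  exact ncard_le_Sn hnc hn (hC.power t) ι

end NF

/-! ### Dependent sets and guessing games -/

namespace GG

variable {F : Type} {ar : F → ℕ} {V : Type}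

open NF

theorem exists_Dep_Wl [Finite V] (Γ : Inst F ar V) {n : ℕ} (hn : 0 < n) :
    ∃ C : Set (V → Fin n), Dep Γ C ∧ Wl (LDepE Γ) (lamΓ Γ) (LSrc Γ) n = C.ncard := by
  obtain ⟨g, hg⟩ := Nat.sSup_mem (s := {m | ∃ g : ∀ v, ({u // LDepE Γ u v} → Fin n) → Fin n,
    m = {a : V → Fin n | IsWinningL (LDepE Γ) (lamΓ Γ) (LSrc Γ) g a}.ncard})
    ⟨_, fun _ _ => ⟨0, hn⟩, rfl⟩ (bddAbove_ncard n _)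
  refine ⟨_, ?_, hg⟩
  intro e he a ha b hb hab
  obtain ⟨ℓ, rfl⟩ := List.get_of_mem he
  have hℓ : (Sum.inr ℓ : V ⊕ Fin Γ.eqs.length) ∉ LSrc Γ := by simp [LSrc]
  have h1 := ha _ hℓ
  have h2 := hb _ hℓ
  change a (lamΓ Γ (Sum.inr ℓ)) = b (lamΓ Γ (Sum.inr ℓ))
  rw [h1, h2]
  congr 1
  funext ⟨u, hu⟩
  rcases u with x | ℓ'
  · obtain ⟨i, rfl⟩ := hu
    exact hab i
  · exact hu.elim

theorem le_Wl [Finite V] {Γ : Inst F ar V} {n : ℕ} (hn : 0 < n) {C : Set (V → Fin n)}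
    (hC : Dep Γ C) : C.ncard ≤ Wl (LDepE Γ) (lamΓ Γ) (LSrc Γ) n := by
  classical
  let g : ∀ v, ({u // LDepE Γ u v} → Fin n) → Fin n := fun v x =>
    if h : ∃ b ∈ C, x = fun u => b (lamΓ Γ u.1) then h.choose (lamΓ Γ v) else ⟨0, hn⟩
  refine le_trans (Set.ncard_le_ncard ?_)
    (le_csSup (bddAbove_ncard n fun g : ∀ v, ({u // LDepE Γ u v} → Fin n) → Fin n =>
      {a : V → Fin n | IsWinningL (LDepE Γ) (lamΓ Γ) (LSrc Γ) g a}) ⟨g, rfl⟩)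
  intro a ha v hv
  rcases v with x | ℓ
  · exact (hv ⟨x, rfl⟩).elim
  have hex : ∃ b ∈ C, (fun u : {u // LDepE Γ u (Sum.inr ℓ)} => a (lamΓ Γ u.1)) =
      fun u => b (lamΓ Γ u.1) := ⟨a, ha, rfl⟩
  have hg : g (Sum.inr ℓ) (fun u => a (lamΓ Γ u.1)) = hex.choose (lamΓ Γ (Sum.inr ℓ)) :=
    dif_pos hex
  rw [hg]
  obtain ⟨hb, hab⟩ := hex.choose_spec
  exact hC _ (List.get_mem _ ℓ) a ha _ hb fun i => congrFun hab ⟨Sum.inl _, i, rfl⟩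

/-- In functional normal form the in-neighbours of a defined variable are exactly the arguments of
its unique equation, so winning sets of the unlabelled game are dependent. -/
theorem exists_Dep_W [Finite V] {Γ : Inst F ar V} (hF : FNF Γ) {n : ℕ} (hn : 0 < n) :
    ∃ C : Set (V → Fin n), Dep Γ C ∧ W (DepE Γ) (Src Γ) n = C.ncard := by
  obtain ⟨g, hg⟩ := Nat.sSup_mem (s := {m | ∃ g : ∀ v, ({u // DepE Γ u v} → Fin n) → Fin n,
    m = {a : V → Fin n | IsWinning (DepE Γ) (Src Γ) g a}.ncard})
    ⟨_, fun _ _ => ⟨0, hn⟩, rfl⟩ (bddAbove_ncard n _)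
  refine ⟨_, ?_, hg⟩
  intro e he a ha b hb hab
  have hs : e.2.2 ∉ Src Γ := fun h => h e he rfl
  rw [ha _ hs, hb _ hs]
  congr 1
  funext ⟨u, e', he', ⟨i, hi⟩, hj⟩
  obtain rfl := hF e' he' e he hj
  subst hi
  exact hab i

theorem le_W [Finite V] {Γ : Inst F ar V} {n : ℕ} (hn : 0 < n) {C : Set (V → Fin n)}
    (hC : Dep Γ C) : C.ncard ≤ W (DepE Γ) (Src Γ) n := by
  classical
  let g : ∀ v, ({u // DepE Γ u v} → Fin n) → Fin n := fun v x =>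
    if h : ∃ b ∈ C, x = fun u => b u.1 then h.choose v else ⟨0, hn⟩
  refine le_trans (Set.ncard_le_ncard ?_)
    (le_csSup (bddAbove_ncard n fun g : ∀ v, ({u // DepE Γ u v} → Fin n) → Fin n =>
      {a : V → Fin n | IsWinning (DepE Γ) (Src Γ) g a}) ⟨g, rfl⟩)
  intro a ha v hv
  obtain ⟨e, he, rfl⟩ : ∃ e ∈ Γ.eqs, e.2.2 = v := by simpa [Src] using hv
  have hex : ∃ b ∈ C, (fun u : {u // DepE Γ u e.2.2} => a u.1) = fun u => b u.1 := ⟨a, ha, rfl⟩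
  have hg : g e.2.2 (fun u => a u.1) = hex.choose e.2.2 := dif_pos hex
  rw [hg]
  obtain ⟨hb, hab⟩ := hex.choose_spec
  exact hC e he a ha _ hb fun i => congrFun hab ⟨_, e, he, ⟨i, rfl⟩, rfl⟩

theorem one_le_Wl_s13 [Finite V] (Γ : Inst F ar V) {n : ℕ} (hn : 0 < n) :
    1 ≤ Wl (LDepE Γ) (lamΓ Γ) (LSrc Γ) n := by
  have hC : Dep Γ {fun _ : V => (⟨0, hn⟩ : Fin n)} := by
    rintro e - a rfl b rfl -
    rfl
  simpa using le_Wl hn hC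

theorem bddAbove_gnL [Fintype V] (Γ : Inst F ar V) :
    BddAbove {x : ℝ | ∃ n : ℕ, 2 ≤ n ∧
      x = Real.logb n (Wl (LDepE Γ) (lamΓ Γ) (LSrc Γ) n)} := by
  refine ⟨Fintype.card V, ?_⟩
  rintro _ ⟨n, hn, rfl⟩
  have h1 := one_le_Wl_s13 Γ (n := n) (by omega)
  obtain ⟨C, -, hC⟩ := exists_Dep_Wl Γ (n := n) (by omega)
  have h2 : Wl (LDepE Γ) (lamΓ Γ) (LSrc Γ) n ≤ n ^ Fintype.card V := by
    rw [hC]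
    simpa [Nat.card_fun] using Set.ncard_le_card C
  rw [Real.logb_le_iff_le_rpow (by exact_mod_cast hn) (by exact_mod_cast h1), Real.rpow_natCast]
  exact_mod_cast h2

end GG

/-! ### Asymptotics -/

/-- The quantitative lower bound with the largest `t` such that `m ^ t * (|V| + 1) ≤ n`. -/
theorem NF.lower_bound {F : Type} {ar : F → ℕ} {V : Type} [Fintype V] {Γ : NF.Inst F ar V}
    (hnc : NF.NoCollision Γ) {m n : ℕ} (hm : 2 ≤ m) {C : Set (V → Fin m)} (hC : NF.Dep Γ C)
    (hC1 : 1 ≤ C.ncard) (hn : Fintype.card V + 2 ≤ n) :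
    Real.logb m C.ncard * (1 - Real.log (m * (Fintype.card V + 1)) / Real.log n) ≤
      Real.logb n (NF.Sn Γ n) := by
  set k := Fintype.card V
  set t := Nat.log m (n / (k + 1))
  have hq : n / (k + 1) ≠ 0 := by
    have := Nat.div_pos (show k + 1 ≤ n by omega) (Nat.succ_pos k)
    omega
  have ht1 : m ^ t ≤ n / (k + 1) := Nat.pow_log_le_self m hq
  have ht2 : n / (k + 1) < m ^ (t + 1) := Nat.lt_pow_succ_log_self (by omega) _
  rw [Nat.div_lt_iff_lt_mul (Nat.succ_pos k)] at ht2
  have hk : k * m ^ t ≤ n := by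
    have := (Nat.le_div_iff_mul_le (Nat.succ_pos k)).1 ht1
    nlinarith
  have hS : C.ncard ^ t ≤ NF.Sn Γ n := NF.pow_ncard_le_Sn hnc (by omega) hC hk
  have hlm : 0 < Real.log m := Real.log_pos (by exact_mod_cast hm)
  have hln : 0 < Real.log n := Real.log_pos (by exact_mod_cast (by omega : 1 < n))
  have hlC : 0 ≤ Real.log C.ncard := Real.log_nonneg (by exact_mod_cast hC1)
  have hc : (0 : ℝ) < m * (k + 1) := by positivity
  have hlogn : Real.log n ≤ t * Real.log m + Real.log (m * (k + 1)) := by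
    rw [← Real.log_pow, ← Real.log_mul (by positivity) hc.ne']
    apply Real.log_le_log (by exact_mod_cast (by omega : 0 < n))
    have : (n : ℝ) ≤ m ^ (t + 1) * (k + 1) := by exact_mod_cast ht2.le
    calc (n : ℝ) ≤ m ^ (t + 1) * (k + 1) := this
      _ = _ := by ring
  have hlS : t * Real.log C.ncard ≤ Real.log (NF.Sn Γ n) := by
    rw [← Real.log_pow]
    apply Real.log_le_log
    · have : (0 : ℝ) < C.ncard := by exact_mod_cast hC1
      positivity
    · exact_mod_cast hS
  have h1 : 1 - Real.log (m * (k + 1)) / Real.log n =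
      (Real.log n - Real.log (m * (k + 1))) / Real.log n := by field_simp
  rw [Real.logb, Real.logb, h1, ← mul_div_assoc]
  refine div_le_div_of_nonneg_right ?_ hln.le
  calc Real.log C.ncard / Real.log m * (Real.log n - Real.log (m * (k + 1)))
      ≤ Real.log C.ncard / Real.log m * (t * Real.log m) :=
        mul_le_mul_of_nonneg_left (by linarith) (by positivity)
    _ = t * Real.log C.ncard := by field_simp
    _ ≤ _ := hlS

/-- **Exponent and o(1)-tight asymptotics.** Let `Γ` be a Term Coding
instance, let `Γnf` be a normal-form instance with the Term-DAG/no-collision property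
equivalent to `Γ` (i.e. `S_n(Γnf) = S_n(Γ)` for all `n`), let `Γdiv` be its
diversification and `(G̃_Γ, λ_Γ, S_Γ)` the labelled dependency graph of `Γdiv`, and set
`α(Γ) := gn(G̃_Γ, λ_Γ, S_Γ)`.  Then `log_n S_n(Γ) → α(Γ)` as `n → ∞` (in particular the
limit exists and equals `α(Γ)`).  Moreover, if `Γnf` is in functional normal form, then
`α(Γ) = gn(G_Γ, Src(Γnf))`, where `G_Γ` is the unlabelled dependency digraph. -/
theorem exponent_asymptotics {F : Type} {ar : F → ℕ} {V : Type} [Fintype V]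
    {F' : Type} {ar' : F' → ℕ} {V' : Type} [Fintype V']
    (Γ : TC.Instance F ar V) (Γnf : NF.Inst F' ar' V')
    (heqv : ∀ n : ℕ, NF.Sn Γnf n = TC.Sn Γ n)
    (hnc : NF.NoCollision Γnf) :
    Filter.Tendsto (fun n : ℕ => Real.logb n (TC.Sn Γ n)) Filter.atTop
      (nhds (GG.gnL (NF.LDepE (NF.div Γnf)) (NF.lamΓ (NF.div Γnf))
        (NF.LSrc (NF.div Γnf)))) ∧
    (NF.FNF Γnf →
      GG.gnL (NF.LDepE (NF.div Γnf)) (NF.lamΓ (NF.div Γnf)) (NF.LSrc (NF.div Γnf)) =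
        GG.gn (NF.DepE Γnf) (NF.Src Γnf)) := by
  have hbdd := GG.bddAbove_gnL (NF.div Γnf)
  refine ⟨?_, fun hF => ?_⟩
  · simp_rw [← heqv]
    refine tendsto_order.2 ⟨fun b hb => ?_, fun b hb => ?_⟩
    · obtain ⟨_, ⟨m, hm, rfl⟩, hbm⟩ := exists_lt_of_lt_csSup (by exact ⟨_, 2, le_rfl, rfl⟩) hb
      have hm1 := GG.one_le_Wl_s13 (NF.div Γnf) (n := m) (by omega)
      obtain ⟨C, hC, hW⟩ := GG.exists_Dep_Wl (NF.div Γnf) (n := m) (by omega)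
      rw [hW] at hbm hm1
      rw [NF.dep_div] at hC
      have hlim : Filter.Tendsto (fun n : ℕ => Real.logb m C.ncard *
          (1 - Real.log (m * (Fintype.card V' + 1)) / Real.log n)) Filter.atTop
          (nhds (Real.logb m C.ncard * (1 - 0))) :=
        (tendsto_const_nhds.sub (Filter.Tendsto.const_div_atTop
          (Real.tendsto_log_atTop.comp tendsto_natCast_atTop_atTop) _)).const_mul _
      rw [sub_zero, mul_one] at hlim
      filter_upwards [hlim.eventually_const_lt hbm,
        Filter.eventually_ge_atTop (Fintype.card V' + 2)] with n hn1 hn2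
      exact hn1.trans_le (NF.lower_bound hnc hm hC hm1 hn2)
    · filter_upwards [Filter.eventually_ge_atTop (Fintype.card V' + 2)] with n hn
      have hn0 : 0 < n := by omega
      refine lt_of_le_of_lt ?_ hb
      refine le_trans ?_ (le_csSup hbdd ⟨n, by omega, rfl⟩)
      obtain ⟨C, hC, hS⟩ := NF.exists_Dep_Sn Γnf hn0
      have hle := GG.le_Wl hn0 ((NF.dep_div Γnf C).2 hC)
      rw [← hS] at hle
      -- `Sn` is positive: a singleton of a constant assignment is dependent, with `t = 1`, `m = 1`.
      have hpos : 1 ≤ NF.Sn Γnf n := by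
        have hD : NF.Dep Γnf {fun _ : V' => (0 : Fin 1)} := by
          rintro e - a rfl b rfl -
          rfl
        simpa using NF.pow_ncard_le_Sn (t := 1) hnc hn0 hD (by omega)
      exact Real.logb_le_logb_of_le (by exact_mod_cast (by omega : 1 < n))
        (by exact_mod_cast hpos) (by exact_mod_cast hle)
  · have hWW : ∀ n : ℕ, 2 ≤ n →
        GG.Wl (NF.LDepE (NF.div Γnf)) (NF.lamΓ (NF.div Γnf)) (NF.LSrc (NF.div Γnf)) n =
          GG.W (NF.DepE Γnf) (NF.Src Γnf) n := by
      intro n hn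
      have hn0 : 0 < n := by omega
      apply le_antisymm
      · obtain ⟨C, hC, hW⟩ := GG.exists_Dep_Wl (NF.div Γnf) hn0
        rw [hW]
        exact GG.le_W hn0 ((NF.dep_div Γnf C).1 hC)
      · obtain ⟨C, hC, hW⟩ := GG.exists_Dep_W hF hn0
        rw [hW]
        exact GG.le_Wl hn0 ((NF.dep_div Γnf C).2 hC)
    unfold GG.gnL GG.gn
    congr 1
    ext x
    refine exists_congr fun n => and_congr_right fun hn => ?_
    rw [hWW n hn]
end

section
/- The guessing number of the bidirected 5-cycle is 5/2: for the digraph C₅ on vertex set ℤ/5ℤ with edges i → i+1 and i+1 → i for all i, and empty source set, one has W_n(C₅) ≤ n^{5/2} for every n ≥ 2, and W_{m²}(C₅) ≥ m⁵ for every m ≥ 1; consequently gn(C₅) := sup_{n≥2} log_n W_n(C₅) = 5/2. -/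
/-- The bidirected 5-cycle on `ℤ/5ℤ`: edges `i → i+1` and `i+1 → i` for all `i`. -/
def C5E : ZMod 5 → ZMod 5 → Prop := fun u v => v = u + 1 ∨ v = u - 1

/-- A set of configurations on the 5-cycle on which each coordinate is determined by its two
neighbours has at most `n ^ (5/2)` elements. -/
theorem card_sq_le_of_determined {n : ℕ} (s : Finset (ZMod 5 → Fin n))
    (h : ∀ v, ∀ a ∈ s, ∀ b ∈ s, a (v - 1) = b (v - 1) → a (v + 1) = b (v + 1) → a v = b v) :
    s.card ^ 2 ≤ n ^ 5 := by
  classical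
  let F : Fin n × Fin n → Finset (ZMod 5 → Fin n) := fun p => s.filter fun a => (a 2, a 3) = p
  let P : Fin n × Fin n → Finset (Fin n) := fun p => (F p).image fun a => a 1
  let Q : Fin n × Fin n → Finset (Fin n) := fun p => (F p).image fun a => a 4
  have hF : ∀ p a, a ∈ F p ↔ a ∈ s ∧ a 2 = p.1 ∧ a 3 = p.2 := by
    intro p a
    simp [F, Prod.ext_iff]
  -- The hypothesis `h` at each vertex; the indices `v ± 1` in `ZMod 5` reduce definitionally.
  have h0 : ∀ a ∈ s, ∀ b ∈ s, a 4 = b 4 → a 1 = b 1 → a 0 = b 0 := h 0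
  have h1 : ∀ a ∈ s, ∀ b ∈ s, a 0 = b 0 → a 2 = b 2 → a 1 = b 1 := h 1
  have h2 : ∀ a ∈ s, ∀ b ∈ s, a 1 = b 1 → a 3 = b 3 → a 2 = b 2 := h 2
  have h3 : ∀ a ∈ s, ∀ b ∈ s, a 2 = b 2 → a 4 = b 4 → a 3 = b 3 := h 3
  have h4 : ∀ a ∈ s, ∀ b ∈ s, a 3 = b 3 → a 0 = b 0 → a 4 = b 4 := h 4
  have hext : ∀ a b : ZMod 5 → Fin n,
      a 0 = b 0 → a 1 = b 1 → a 2 = b 2 → a 3 = b 3 → a 4 = b 4 → a = b := by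
    intro a b e0 e1 e2 e3 e4
    funext v
    fin_cases v
    exacts [e0, e1, e2, e3, e4]
  have hN : ∀ p, (F p).card ≤ n := by
    intro p
    have := Finset.card_le_card_of_injOn (s := F p) (t := Finset.univ) (fun a => a 0)
      (fun _ _ => Finset.mem_coe.2 (Finset.mem_univ _)) (by
        intro a ha b hb e0
        obtain ⟨ha, ha2, ha3⟩ := (hF p a).1 ha
        obtain ⟨hb, hb2, hb3⟩ := (hF p b).1 hb
        have e2 := ha2.trans hb2.symm
        have e3 := ha3.trans hb3.symm
        exact hext a b e0 (h1 a ha b hb e0 e2) e2 e3 (h4 a ha b hb e3 e0))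
    simpa using this
  have hPQ : ∀ p, (F p).card ≤ (P p).card * (Q p).card := by
    intro p
    rw [← Finset.card_product]
    refine Finset.card_le_card_of_injOn (fun a => (a 1, a 4)) ?_ ?_
    · intro a ha
      exact Finset.mem_coe.2 (Finset.mem_product.2
        ⟨Finset.mem_image_of_mem _ ha, Finset.mem_image_of_mem _ ha⟩)
    · intro a ha b hb e
      obtain ⟨e1, e4⟩ := Prod.mk.inj e
      obtain ⟨ha, ha2, ha3⟩ := (hF p a).1 ha
      obtain ⟨hb, hb2, hb3⟩ := (hF p b).1 hb
      exact hext a b (h0 a ha b hb e4 e1) e1 (ha2.trans hb2.symm) (ha3.trans hb3.symm) e4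
  have hP : ∑ p, (P p).card ≤ n ^ 2 := by
    rw [← Finset.card_sigma]
    have := Finset.card_le_card_of_injOn (s := Finset.univ.sigma P)
      (t := (Finset.univ : Finset (Fin n × Fin n))) (fun x => (x.2, x.1.2))
      (fun _ _ => Finset.mem_coe.2 (Finset.mem_univ _)) (by
        rintro ⟨⟨p, q⟩, x⟩ hx ⟨⟨p', q'⟩, x'⟩ hx' e
        obtain ⟨rfl, rfl⟩ : x = x' ∧ q = q' := Prod.mk.inj e
        obtain ⟨a, ha, ha1⟩ := Finset.mem_image.1 (Finset.mem_sigma.1 hx).2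
        obtain ⟨b, hb, hb1⟩ := Finset.mem_image.1 (Finset.mem_sigma.1 hx').2
        obtain ⟨ha, ha2, ha3⟩ := (hF _ a).1 ha
        obtain ⟨hb, hb2, hb3⟩ := (hF _ b).1 hb
        have e2 := h2 a ha b hb (ha1.trans hb1.symm) (ha3.trans hb3.symm)
        obtain rfl : p = p' := ha2.symm.trans (e2.trans hb2)
        rfl)
    simpa [sq] using this
  have hQ : ∑ p, (Q p).card ≤ n ^ 2 := by
    rw [← Finset.card_sigma]
    have := Finset.card_le_card_of_injOn (s := Finset.univ.sigma Q)
      (t := (Finset.univ : Finset (Fin n × Fin n))) (fun x => (x.1.1, x.2))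
      (fun _ _ => Finset.mem_coe.2 (Finset.mem_univ _)) (by
        rintro ⟨⟨p, q⟩, x⟩ hx ⟨⟨p', q'⟩, x'⟩ hx' e
        obtain ⟨rfl, rfl⟩ : p = p' ∧ x = x' := Prod.mk.inj e
        obtain ⟨a, ha, ha4⟩ := Finset.mem_image.1 (Finset.mem_sigma.1 hx).2
        obtain ⟨b, hb, hb4⟩ := Finset.mem_image.1 (Finset.mem_sigma.1 hx').2
        obtain ⟨ha, ha2, ha3⟩ := (hF _ a).1 ha
        obtain ⟨hb, hb2, hb3⟩ := (hF _ b).1 hb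
        have e3 := h3 a ha b hb (ha2.trans hb2.symm) (ha4.trans hb4.symm)
        obtain rfl : q = q' := ha3.symm.trans (e3.trans hb3)
        rfl)
    simpa [sq] using this
  have hcard : s.card = ∑ p, (F p).card :=
    Finset.card_eq_sum_card_fiberwise fun _ _ => Finset.mem_coe.2 (Finset.mem_univ _)
  calc s.card ^ 2 = (∑ p, (F p).card) ^ 2 := by rw [hcard]
    _ ≤ (∑ p, n * (P p).card) * ∑ p, (Q p).card := by
        refine Finset.sum_sq_le_sum_mul_sum_of_sq_le_mul _ (fun _ _ => Nat.zero_le _)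
          (fun _ _ => Nat.zero_le _) fun p _ => ?_
        calc (F p).card ^ 2 = (F p).card * (F p).card := sq _
          _ ≤ n * ((P p).card * (Q p).card) := Nat.mul_le_mul (hN p) (hPQ p)
          _ = n * (P p).card * (Q p).card := (mul_assoc _ _ _).symm
    _ = n * (∑ p, (P p).card) * ∑ p, (Q p).card := by rw [← Finset.mul_sum]
    _ ≤ n * n ^ 2 * n ^ 2 := by gcongr
    _ = n ^ 5 := by ring

theorem C5E_pred (v : ZMod 5) : C5E (v - 1) v := Or.inl (by ring)

theorem C5E_succ (v : ZMod 5) : C5E (v + 1) v := Or.inr (by ring)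

theorem ncard_winning_sq_le {n : ℕ}
    (g : ∀ v : ZMod 5, ({u : ZMod 5 // C5E u v} → Fin n) → Fin n) :
    {a : ZMod 5 → Fin n | GG.IsWinning C5E ∅ g a}.ncard ^ 2 ≤ n ^ 5 := by
  classical
  rw [Set.ncard_eq_toFinset_card']
  refine card_sq_le_of_determined _ fun v a ha b hb e₁ e₂ => ?_
  have ha : GG.IsWinning C5E ∅ g a := by simpa using ha
  have hb : GG.IsWinning C5E ∅ g b := by simpa using hb
  rw [ha v (Set.notMem_empty v), hb v (Set.notMem_empty v)]
  congr 1
  funext ⟨u, hu⟩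
  rcases hu with hu | hu
  · obtain rfl : u = v - 1 := by rw [hu]; ring
    exact e₁
  · obtain rfl : u = v + 1 := by rw [hu]; ring
    exact e₂

theorem bddAbove_winning_counts (n : ℕ) :
    BddAbove {m | ∃ g : ∀ v : ZMod 5, ({u : ZMod 5 // C5E u v} → Fin n) → Fin n,
      m = {a : ZMod 5 → Fin n | GG.IsWinning C5E ∅ g a}.ncard} := by
  refine ⟨n ^ 5, ?_⟩
  rintro m ⟨g, rfl⟩
  exact (Nat.le_self_pow two_ne_zero _).trans (ncard_winning_sq_le g)

theorem W_sq_le {n : ℕ} (hn : 0 < n) : GG.W C5E (∅ : Set (ZMod 5)) n ^ 2 ≤ n ^ 5 := by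
  obtain ⟨g, hg⟩ := Nat.sSup_mem (by exact ⟨_, fun _ _ => ⟨0, hn⟩, rfl⟩)
    (bddAbove_winning_counts n)
  have hW : GG.W C5E (∅ : Set (ZMod 5)) n = _ := hg
  rw [hW]
  exact ncard_winning_sq_le g

theorem W_le_rpow {n : ℕ} (hn : 0 < n) :
    (GG.W C5E (∅ : Set (ZMod 5)) n : ℝ) ≤ (n : ℝ) ^ ((5 : ℝ) / 2) := by
  refine (pow_le_pow_iff_left₀ (Nat.cast_nonneg _) (by positivity) two_ne_zero).1 ?_
  rw [← Real.rpow_natCast ((n : ℝ) ^ ((5 : ℝ) / 2)) 2, ← Real.rpow_mul (Nat.cast_nonneg n)]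
  have h : (5 : ℝ) / 2 * (2 : ℕ) = (5 : ℕ) := by norm_num
  rw [h, Real.rpow_natCast]
  exact_mod_cast W_sq_le hn

theorem pow_five_le_W (m : ℕ) : m ^ 5 ≤ GG.W C5E (∅ : Set (ZMod 5)) (m ^ 2) := by
  classical
  let e : Fin (m ^ 2) ≃ Fin m × Fin m := Fintype.equivOfCardEq (by simp [sq])
  -- `x v` is the value on the edge between `v - 1` and `v`.
  let c : (ZMod 5 → Fin m) → ZMod 5 → Fin (m ^ 2) := fun x v => e.symm (x v, x (v + 1))
  let g : ∀ v : ZMod 5, ({u : ZMod 5 // C5E u v} → Fin (m ^ 2)) → Fin (m ^ 2) := fun v f =>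
    e.symm ((e (f ⟨v - 1, C5E_pred v⟩)).2, (e (f ⟨v + 1, C5E_succ v⟩)).1)
  have hc : Function.Injective c := by
    intro x y hxy
    funext v
    exact (Prod.mk.inj (e.symm.injective (congrFun hxy v))).1
  have hwin : Set.range c ⊆ {a | GG.IsWinning C5E ∅ g a} := by
    rintro _ ⟨x, rfl⟩ v -
    simp [c, g]
  calc m ^ 5 = (Set.range c).ncard := by
        rw [← Set.image_univ, Set.ncard_image_of_injective _ hc, Set.ncard_univ]
        simp [ZMod.card]
    _ ≤ {a | GG.IsWinning C5E ∅ g a}.ncard := Set.ncard_le_ncard hwin (Set.toFinite _)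
    _ ≤ GG.W C5E (∅ : Set (ZMod 5)) (m ^ 2) := le_csSup (bddAbove_winning_counts _) ⟨g, rfl⟩

/-- **gn(C₅) = 5/2.** For the bidirected 5-cycle `C₅` (empty source set):
`W_n(C₅) ≤ n^{5/2}` for every `n ≥ 2`, `W_{m²}(C₅) ≥ m⁵` for every `m ≥ 1`, and
consequently `gn(C₅) := sup_{n≥2} log_n W_n(C₅) = 5/2`. -/
theorem guessing_number_C5 :
    (∀ n : ℕ, 2 ≤ n → (GG.W C5E (∅ : Set (ZMod 5)) n : ℝ) ≤ (n : ℝ) ^ ((5 : ℝ) / 2)) ∧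
    (∀ m : ℕ, 1 ≤ m → m ^ 5 ≤ GG.W C5E (∅ : Set (ZMod 5)) (m ^ 2)) ∧
    GG.gn C5E (∅ : Set (ZMod 5)) = 5 / 2 := by
  refine ⟨fun n hn => W_le_rpow (by omega), fun m _ => pow_five_le_W m, ?_⟩
  refine IsGreatest.csSup_eq ⟨⟨4, by norm_num, ?_⟩, ?_⟩
  · have hW : (GG.W C5E (∅ : Set (ZMod 5)) 4 : ℝ) = ((4 : ℕ) : ℝ) ^ ((5 : ℝ) / 2) := by
      refine le_antisymm (W_le_rpow (by norm_num)) ?_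
      have h32 : ((4 : ℕ) : ℝ) ^ ((5 : ℝ) / 2) = 32 := by
        have h4 : ((4 : ℕ) : ℝ) = (2 : ℝ) ^ (2 : ℝ) := by norm_num
        rw [h4, ← Real.rpow_mul (by norm_num)]
        norm_num
      rw [h32]
      have := pow_five_le_W 2
      norm_num at this
      exact_mod_cast this
    rw [hW, Real.logb_rpow (by norm_num) (by norm_num)]
  · rintro _ ⟨n, hn, rfl⟩
    have hn1 : (1 : ℝ) < n := by exact_mod_cast hn
    rcases Nat.eq_zero_or_pos (GG.W C5E (∅ : Set (ZMod 5)) n) with h | h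
    · rw [h]
      norm_num
    · rw [Real.logb_le_iff_le_rpow hn1 (by exact_mod_cast h)]
      exact W_le_rpow (by omega)
end

section
/- Let A be a finite set and let f : A × A → A be a quasigroup operation (for each fixed y the map x ↦ f(x,y) is a bijection of A, and for each fixed x the map y ↦ f(x,y) is a bijection of A). Let r := |{(f(x,y), f(y,x)) : x, y ∈ A}|. Then there exist maps h₁, h₂, h₃, h₄ : A × A → A such that the set of pairs (x,y) ∈ A² satisfying all four equations h₁(f(x,y), y) = x, h₂(x, f(x,y)) = y, h₃(f(x,y), f(y,x)) = x, h₄(f(x,y), f(y,x)) = y has size exactly r. -/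
/-!
Let `F (x, y) = (f x y, f y x)`. The first two decoding equations hold at every pair when `h₁`, `h₂`
are the division operations of the quasigroup. For `h₃`, `h₄` take the two components of a
section `G` of `F` over its range. The last two equations then say `G (F p) = p`, and `F` restricts
to a bijection from the set of such `p` (one chosen point per fibre) onto the range of `F`.
-/

/-- The four SOLS decoding equations at a pair `p = (x,y)`:
`h₁(f(x,y), y) = x`, `h₂(x, f(x,y)) = y`, `h₃(f(x,y), f(y,x)) = x`,
`h₄(f(x,y), f(y,x)) = y`. -/
def SOLSeqs {A : Type} (f h₁ h₂ h₃ h₄ : A → A → A) (p : A × A) : Prop :=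
  h₁ (f p.1 p.2) p.2 = p.1 ∧ h₂ p.1 (f p.1 p.2) = p.2 ∧
    h₃ (f p.1 p.2) (f p.2 p.1) = p.1 ∧ h₄ (f p.1 p.2) (f p.2 p.1) = p.2

/-- **An r-SOLS lower bound.** Let `A` be a finite set and `f` a quasigroup
operation on `A` (all left and right translations are bijections).  Let
`r := |{(f(x,y), f(y,x)) : x, y ∈ A}|`.  Then there exist decoding maps
`h₁, h₂, h₃, h₄ : A × A → A` such that the set of pairs `(x,y) ∈ A²` satisfying all four
SOLS decoding equations has size exactly `r`. -/
theorem r_SOLS_lower_bound (A : Type) [Fintype A] (f : A → A → A)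
    (hleft : ∀ y : A, Function.Bijective fun x => f x y)
    (hright : ∀ x : A, Function.Bijective fun y => f x y) :
    ∃ h₁ h₂ h₃ h₄ : A → A → A,
      {p : A × A | SOLSeqs f h₁ h₂ h₃ h₄ p}.ncard =
        {q : A × A | ∃ x y : A, q = (f x y, f y x)}.ncard := by
  classical
  let F : A × A → A × A := fun p => (f p.1 p.2, f p.2 p.1)
  -- Off the range of `F` the value of `G` is irrelevant; `q` itself avoids assuming `A` nonempty.
  let G : A × A → A × A := fun q => if h : ∃ p, F p = q then h.choose else q
  have hG : ∀ p, F (G (F p)) = F p := by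
    intro p
    have h : ∃ p', F p' = F p := ⟨p, rfl⟩
    simp only [G, dif_pos h]
    exact h.choose_spec
  choose d₁ hd₁ using fun y => (hleft y).2
  choose d₂ hd₂ using fun x => (hright x).2
  refine ⟨fun z y => d₁ y z, fun x z => d₂ x z, fun a b => (G (a, b)).1,
    fun a b => (G (a, b)).2, ?_⟩
  have hS : {p : A × A | SOLSeqs f (fun z y => d₁ y z) (fun x z => d₂ x z)
      (fun a b => (G (a, b)).1) (fun a b => (G (a, b)).2) p} = {p | G (F p) = p} := by
    ext p
    constructor
    · rintro ⟨-, -, h3, h4⟩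
      exact Prod.ext h3 h4
    · intro h
      exact ⟨(hleft p.2).1 (hd₁ p.2 _), (hright p.1).1 (hd₂ p.1 _),
        congrArg Prod.fst h, congrArg Prod.snd h⟩
  have hR : {q : A × A | ∃ x y : A, q = (f x y, f y x)} = F '' {p | G (F p) = p} := by
    ext q
    constructor
    · rintro ⟨x, y, rfl⟩
      exact ⟨G (F (x, y)), congrArg G (hG (x, y)), hG (x, y)⟩
    · rintro ⟨p, -, rfl⟩
      exact ⟨p.1, p.2, rfl⟩
  rw [hS, hR, Set.ncard_image_of_injOn]
  intro p hp p' hp' h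
  exact hp.symm.trans ((congrArg G h).trans hp')
end

section
/- For the four-term relay map, D₂ = 10 and D₃ = 51; that is, the maximum over all binary operations f on a 2-element set of the number of distinct values of the map T_f equals 10, and the maximum over all binary operations f on a 3-element set equals 51. Moreover D₂ is attained by f(x,y) = xy on {0,1}. -/
/-!
A quadruple `(x₁, x₂, y₁, y₂)` with `x₁ = x₂` has an image of the form `(a, b, a, b)`, and one with
`y₁ = y₂` has an image of the form `(a, a, b, b)`. There are `n²` values of the first form and
`n² - n` further ones of the second (those with `a ≠ b`). The remaining quadruples have
`x₁ ≠ x₂` and `y₁ ≠ y₂`, so there are `(n² - n)²` of them. Hence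
`D_n ≤ n² + (n² - n) + (n² - n)²` for every `n`, which is `10` for `n = 2` and `51` for `n = 3`;
`relayMap_ncard_le` is this bound. Both values are attained: by multiplication for `n = 2`, and by
the explicit operation `relayWitness` for `n = 3`.
-/

/-- The four-term relay map
`T_f : (x₁, x₂, y₁, y₂) ↦ (f(x₁,y₁), f(x₁,y₂), f(x₂,y₁), f(x₂,y₂))` induced by a single
binary operation `f`. -/
def relayMap {A : Type} (f : A → A → A) : A × A × A × A → A × A × A × A :=
  fun p => (f p.1 p.2.2.1, f p.1 p.2.2.2, f p.2.1 p.2.2.1, f p.2.1 p.2.2.2)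

/-- `D_n`: the maximum, over all binary operations `f` on an `n`-element set, of the
number of distinct values of the four-term relay map `T_f`. -/
noncomputable def relayD (n : ℕ) : ℕ :=
  sSup {m | ∃ f : Fin n → Fin n → Fin n, m = (Set.range (relayMap f)).ncard}

theorem relayMap_ncard_le {n : ℕ} (f : Fin n → Fin n → Fin n) :
    (Set.range (relayMap f)).ncard ≤ n * n + (n * n - n) + (n * n - n) * (n * n - n) := by
  classical
  let S : Finset (Fin n × Fin n × Fin n × Fin n) :=
    (Finset.univ : Finset (Fin n × Fin n)).image fun p => (p.1, p.2, p.1, p.2)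
  let R : Finset (Fin n × Fin n × Fin n × Fin n) :=
    (Finset.univ : Finset (Fin n)).offDiag.image fun p => (p.1, p.1, p.2, p.2)
  let G : Finset (Fin n × Fin n × Fin n × Fin n) :=
    ((Finset.univ : Finset (Fin n)).offDiag ×ˢ (Finset.univ : Finset (Fin n)).offDiag).image
      fun q => relayMap f (q.1.1, q.1.2, q.2.1, q.2.2)
  have hS : S.card ≤ n * n := Finset.card_image_le.trans (by simp)
  have hR : R.card ≤ n * n - n := Finset.card_image_le.trans (by simp [Finset.offDiag_card])
  have hG : G.card ≤ (n * n - n) * (n * n - n) :=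
    Finset.card_image_le.trans (by simp [Finset.offDiag_card])
  have hsub : Set.range (relayMap f) ⊆ ((S ∪ R ∪ G : Finset _) : Set _) := by
    rintro _ ⟨⟨x₁, x₂, y₁, y₂⟩, rfl⟩
    simp only [Finset.coe_union, Set.mem_union, Finset.mem_coe]
    by_cases hx : x₁ = x₂
    · subst hx
      exact Or.inl (Or.inl (Finset.mem_image.2 ⟨(f x₁ y₁, f x₁ y₂), Finset.mem_univ _, rfl⟩))
    by_cases hy : y₁ = y₂
    · subst hy
      by_cases hf : f x₁ y₁ = f x₂ y₁
      · -- the constant quadruple `(a, a, a, a)` is already of the form `(a, b, a, b)`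
        exact Or.inl (Or.inl (Finset.mem_image.2
          ⟨(f x₁ y₁, f x₁ y₁), Finset.mem_univ _, by simp [relayMap, hf]⟩))
      · exact Or.inl (Or.inr (Finset.mem_image.2
          ⟨(f x₁ y₁, f x₂ y₁), by simp [hf], rfl⟩))
    · exact Or.inr (Finset.mem_image.2 ⟨((x₁, x₂), (y₁, y₂)), by simp [hx, hy], rfl⟩)
  calc (Set.range (relayMap f)).ncard
      ≤ (((S ∪ R ∪ G : Finset _) : Set _)).ncard := Set.ncard_le_ncard hsub (Finset.finite_toSet _)
    _ = (S ∪ R ∪ G).card := Set.ncard_coe_finset _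
    _ ≤ (S ∪ R).card + G.card := Finset.card_union_le _ _
    _ ≤ S.card + R.card + G.card := by gcongr; exact Finset.card_union_le _ _
    _ ≤ _ := by gcongr

theorem relayMap_ncard_eq {n : ℕ} (f : Fin n → Fin n → Fin n) :
    (Set.range (relayMap f)).ncard = (Finset.univ.image (relayMap f)).card := by
  rw [← Set.ncard_coe_finset, Finset.coe_image, Finset.coe_univ, Set.image_univ]

theorem relayD_eq {n m : ℕ} (hm : n * n + (n * n - n) + (n * n - n) * (n * n - n) = m)
    (f : Fin n → Fin n → Fin n) (hf : (Set.range (relayMap f)).ncard = m) : relayD n = m := by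
  have h : IsGreatest {m | ∃ f : Fin n → Fin n → Fin n, m = (Set.range (relayMap f)).ncard} m := by
    refine ⟨⟨f, hf.symm⟩, ?_⟩
    rintro _ ⟨g, rfl⟩
    exact (relayMap_ncard_le g).trans hm.le
  exact h.csSup_eq

/-- An operation on three elements, given by its multiplication table, whose relay map takes the
largest possible number of values: the `36` quadruples with `x₁ ≠ x₂` and `y₁ ≠ y₂` have distinct
images, none of which is of the form `(a, b, a, b)` or `(a, a, b, b)`, and all `15` values of
those forms occur as well. -/
def relayWitness (x y : Fin 3) : Fin 3 := !![0, 0, 1; 0, 2, 2; 1, 2, 1] x y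

theorem relayWitness_ncard : (Set.range (relayMap relayWitness)).ncard = 51 := by
  rw [relayMap_ncard_eq]
  decide +kernel

theorem relay_mul_ncard : (Set.range (relayMap (fun x y : Fin 2 => x * y))).ncard = 10 := by
  rw [relayMap_ncard_eq]
  decide +kernel

/-- **Exact relay values for n = 2, 3.** For the four-term relay map,
`D₂ = 10` and `D₃ = 51`; moreover `D₂` is attained by the operation `f(x,y) = x·y`
on `{0,1}`. -/
theorem relay_values :
    relayD 2 = 10 ∧ relayD 3 = 51 ∧
      (Set.range (relayMap (fun x y : Fin 2 => x * y))).ncard = 10 := by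
  exact ⟨relayD_eq rfl _ relay_mul_ncard, relayD_eq rfl _ relayWitness_ncard, relay_mul_ncard⟩
end

section
/- Dispersion-to-Term-Coding reduction: let t₁(x), …, t_s(x) be terms in variables x₁, …, x_k over a finite signature, introduce fresh variables y₁, …, y_s and fresh s-ary function symbols h₁, …, h_k, and let Γ_T be the Term Coding instance with equations y_i = t_i(x) for i = 1, …, s and x_j = h_j(y₁, …, y_s) for j = 1, …, k. Then for every n, S_n(Γ_T) = Disp_n(t₁, …, t_s). -/
namespace TC

variable {F : Type} {ar : F → ℕ} {V : Type}

/-- Viewing a term over the signature `(F, ar)` as a term over the enlarged signature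
`(F ⊕ G, Sum.elim ar arG)`. -/
def Term.liftSig {G : Type} {arG : G → ℕ} :
    Term F ar V → Term (F ⊕ G) (Sum.elim ar arG) V
  | .var v => .var v
  | .app f ts => .app (Sum.inl f) fun i => (ts i).liftSig

/-- The Term Coding instance `Γ_T` of the dispersion-to-Term-Coding reduction: fresh
variables `y₁, …, y_s` (the second summand), fresh `s`-ary decoding symbols `h₁, …, h_k`
(the second summand of the signature), and the equations `y_i = t_i(x)` for `i = 1,…,s`
and `x_j = h_j(y₁, …, y_s)` for `j = 1,…,k`. -/
def dispInstance {k s : ℕ} (t : Fin s → Term F ar (Fin k)) :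
    Instance (F ⊕ Fin k) (Sum.elim ar fun _ => s) (Fin k ⊕ Fin s) where
  eqs :=
    ((List.finRange s).map fun i =>
      ((Term.var (Sum.inr i) : Term (F ⊕ Fin k) (Sum.elim ar fun _ => s) (Fin k ⊕ Fin s)),
        ((t i).liftSig.rename Sum.inl))) ++
    ((List.finRange k).map fun j =>
      (Term.app (Sum.inr j) fun i => Term.var (Sum.inr i), Term.var (Sum.inl j)))

end TC

namespace TC

variable {F : Type} {ar : F → ℕ} {V : Type}

theorem Term.eval_rename {A W : Type} (I : Interp F ar A) (g : V → W) (a : W → A)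
    (u : Term F ar V) : (u.rename g).eval I a = u.eval I (a ∘ g) := by
  induction u with
  | var v => rfl
  | app f ts ih =>
    simp only [Term.rename, Term.eval]
    exact congrArg (I f) (funext ih)

theorem Term.eval_liftSig {A G : Type} {arG : G → ℕ}
    (I : Interp (F ⊕ G) (Sum.elim ar arG) A) (a : V → A) (u : Term F ar V) :
    (u.liftSig (arG := arG)).eval I a = u.eval (fun f => I (Sum.inl f)) a := by
  induction u with
  | var v => rfl
  | app f ts ih =>
    simp only [Term.liftSig, Term.eval]
    exact congrArg (I (Sum.inl f)) (funext ih)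

theorem mem_sols_dispInstance {A : Type} {k s : ℕ} (t : Fin s → Term F ar (Fin k))
    (I : Interp (F ⊕ Fin k) (Sum.elim ar fun _ => s) A) (a : Fin k ⊕ Fin s → A) :
    a ∈ sols (dispInstance t) I ↔
      (∀ i, a (Sum.inr i) = (t i).eval (fun f => I (Sum.inl f)) (a ∘ Sum.inl)) ∧
      ∀ j, I (Sum.inr j) (fun i : Fin s => a (Sum.inr i)) = a (Sum.inl j) := by
  simp only [sols, dispInstance, Set.mem_ofPred_eq, List.mem_append, List.mem_map,
    List.mem_finRange, true_and]
  constructor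
  · intro h
    refine ⟨fun i => ?_, fun j => h _ (Or.inr ⟨j, rfl⟩)⟩
    have := h _ (Or.inl ⟨i, rfl⟩)
    rwa [Term.eval_rename, Term.eval_liftSig] at this
  · rintro ⟨h₁, h₂⟩ e (⟨i, rfl⟩ | ⟨j, rfl⟩)
    · rw [Term.eval_rename, Term.eval_liftSig]
      exact h₁ i
    · exact h₂ j

/-- Projecting a solution to its `y`-coordinates is injective with values in the image of `T`. -/
theorem ncard_sols_le {n k s : ℕ} (t : Fin s → Term F ar (Fin k))
    (I : Interp (F ⊕ Fin k) (Sum.elim ar fun _ => s) (Fin n)) :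
    (sols (dispInstance t) I).ncard ≤
      (Set.range fun (a : Fin k → Fin n) (i : Fin s) =>
        (t i).eval (fun f => I (Sum.inl f)) a).ncard := by
  refine Set.ncard_le_ncard_of_injOn (fun a i => a (Sum.inr i)) ?_ ?_ (Set.toFinite _)
  · intro a ha
    exact ⟨a ∘ Sum.inl, funext fun i => (((mem_sols_dispInstance t I a).1 ha).1 i).symm⟩
  · intro a ha b hb hab
    have ha₂ := ((mem_sols_dispInstance t I a).1 ha).2
    have hb₂ := ((mem_sols_dispInstance t I b).1 hb).2
    funext v
    rcases v with j | i
    · rw [← ha₂ j, ← hb₂ j]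
      exact congrArg (I (Sum.inr j)) hab
    · exact congrFun hab i

/-- With the symbols `h_j` decoding by a right inverse of `T`, each output tuple of `T` extends
to a solution. -/
theorem ncard_range_le {n k s : ℕ} [Nonempty (Fin k → Fin n)] (t : Fin s → Term F ar (Fin k))
    (I : Interp F ar (Fin n)) :
    ∃ J : Interp (F ⊕ Fin k) (Sum.elim ar fun _ => s) (Fin n),
      (Set.range fun (a : Fin k → Fin n) (i : Fin s) => (t i).eval I a).ncard ≤
        (sols (dispInstance t) J).ncard := by
  set T : (Fin k → Fin n) → Fin s → Fin n := fun a i => (t i).eval I a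
  let J : Interp (F ⊕ Fin k) (Sum.elim ar fun _ => s) (Fin n) := fun f =>
    match f with
    | Sum.inl f => I f
    | Sum.inr j => fun y : Fin s → Fin n => Function.invFun T y j
  refine ⟨J, Set.ncard_le_ncard_of_injOn (fun y => Sum.elim (Function.invFun T y) y) ?_ ?_
    (Set.toFinite _)⟩
  · intro y hy
    refine (mem_sols_dispInstance t J _).2 ⟨fun i => ?_, fun j => rfl⟩
    exact (congrFun (Function.invFun_eq hy) i).symm
  · intro y _ z _ hyz
    exact funext fun i => congrFun hyz (Sum.inr i)

end TC

/-- **Dispersion-to-Term-Coding reduction.** Let `t₁(x), …, t_s(x)` be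
terms in variables `x₁, …, x_k` over a finite signature, and let `Γ_T` be the Term Coding
instance with fresh variables `y₁, …, y_s`, fresh `s`-ary symbols `h₁, …, h_k`, and
equations `y_i = t_i(x)` and `x_j = h_j(y₁, …, y_s)`.  Then for every `n`,
`S_n(Γ_T) = Disp_n(t₁, …, t_s)`, where `Disp_n` is the maximum over interpretations `I`
on an `n`-element alphabet of the number of distinct output tuples of
`T^I : a ↦ (t₁^I(a), …, t_s^I(a))`. -/
theorem dispersion_to_term_coding {F : Type} {ar : F → ℕ} {k s : ℕ}
    (t : Fin s → TC.Term F ar (Fin k)) (n : ℕ) :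
    TC.Sn (TC.dispInstance t) n =
      sSup {m | ∃ I : TC.Interp F ar (Fin n),
        m = (Set.range fun (a : Fin k → Fin n) (i : Fin s) =>
              (t i).eval I a).ncard} := by
  unfold TC.Sn
  -- Suprema in `ℕ` need boundedness: both sets consist of sizes of subsets of a finite type.
  have bdd_sols : BddAbove {m | ∃ J : TC.Interp (F ⊕ Fin k) (Sum.elim ar fun _ => s) (Fin n),
      m = (TC.sols (TC.dispInstance t) J).ncard} := by
    refine ⟨Nat.card (Fin k ⊕ Fin s → Fin n), ?_⟩
    rintro _ ⟨J, rfl⟩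
    exact Set.ncard_le_card _
  have bdd_range : BddAbove {m | ∃ I : TC.Interp F ar (Fin n),
      m = (Set.range fun (a : Fin k → Fin n) (i : Fin s) => (t i).eval I a).ncard} := by
    refine ⟨Nat.card (Fin s → Fin n), ?_⟩
    rintro _ ⟨I, rfl⟩
    exact Set.ncard_le_card _
  apply le_antisymm
  · refine csSup_le' ?_
    rintro _ ⟨J, rfl⟩
    exact (TC.ncard_sols_le t J).trans (le_csSup bdd_range ⟨_, rfl⟩)
  · refine csSup_le' ?_
    rintro _ ⟨I, rfl⟩
    rcases isEmpty_or_nonempty (Fin k → Fin n) with hE | hN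
    · simp [Set.range_eq_empty]
    · obtain ⟨J, hJ⟩ := TC.ncard_range_le t I
      exact hJ.trans (le_csSup bdd_sols ⟨J, rfl⟩)
end
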